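/- arXiv:2206.09204 — 3 statements merged into one kernel-verified Lean document; each statement's English description precedes it below -/
import Mathlib

section
/- Let u_1, …, u_d be unit vectors in ℝ^m, let g be drawn from the standard Gaussian measure N(0, I_m) on ℝ^m, let w ∈ ℝ^d have nonnegative entries with W = Σ_{j=1}^d w_j, and let ε > 0. Define the random variable Z = Σ_{j=1}^{d} w_j · 1(⟨u_j, g⟩ ≤ −3ε). Then E[(Z − W/2)²] ≥ (1/(2π)) · Σ_{j,k=1}^{d} w_j w_k · arcsin(⟨u_j, u_k⟩) − (3/√(2π)) · ε · W². -/
open MeasureTheory ProbabilityTheory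

lemma aux_charFunDual_gauss (L : StrongDual ℝ ℝ) :
    charFunDual (gaussianReal 0 1) L = Complex.exp (-((L 1 : ℝ) : ℂ) ^ 2 / 2) := by
  rw [charFunDual_eq_charFun_map_one, gaussianReal_map_continuousLinearMap, charFun_gaussianReal]
  simp [sq_nonneg]
  ring_nf

lemma aux_pair_law (m : ℕ) (u v : Fin m → ℝ) (hu : ∑ i, u i ^ 2 = 1) (hv : ∑ i, v i ^ 2 = 1)
    (s : ℝ) (hs : (∑ i, u i * v i) ^ 2 + s ^ 2 = 1) :
    (Measure.pi fun _ : Fin m => gaussianReal 0 1).map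
      (fun g => (∑ i, u i * g i, ∑ i, v i * g i)) =
    ((gaussianReal 0 1).prod (gaussianReal 0 1)).map
      (fun p : ℝ × ℝ => (-p.1, -((∑ i, u i * v i) * p.1 + s * p.2))) := by
  classical
  set ρ := ∑ i, u i * v i with hρ
  let A : (Fin m → ℝ) →L[ℝ] ℝ × ℝ :=
    (∑ i, u i • ContinuousLinearMap.proj (R := ℝ) (φ := fun _ : Fin m => ℝ) i).prod
    (∑ i, v i • ContinuousLinearMap.proj (R := ℝ) (φ := fun _ : Fin m => ℝ) i)
  let B : ℝ × ℝ →L[ℝ] ℝ × ℝ :=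
    (-ContinuousLinearMap.fst ℝ ℝ ℝ).prod
    (-(ρ • ContinuousLinearMap.fst ℝ ℝ ℝ + s • ContinuousLinearMap.snd ℝ ℝ ℝ))
  have hA : (fun g : Fin m → ℝ => (∑ i, u i * g i, ∑ i, v i * g i)) = A := by
    ext g <;> simp [A]
  have hB : (fun p : ℝ × ℝ => (-p.1, -(ρ * p.1 + s * p.2))) = B := by
    ext g <;> simp [B]
  rw [hA, hB]
  have : IsProbabilityMeasure ((Measure.pi fun _ : Fin m => gaussianReal 0 1).map A) :=
    Measure.isProbabilityMeasure_map (by fun_prop)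
  have : IsProbabilityMeasure (((gaussianReal 0 1).prod (gaussianReal 0 1)).map B) :=
    Measure.isProbabilityMeasure_map (by fun_prop)
  refine Measure.ext_of_charFunDual (funext fun L => ?_)
  rw [charFunDual_map, charFunDual_map, charFunDual_prod, charFunDual_pi]
  simp_rw [aux_charFunDual_gauss]
  rw [← Complex.exp_add, ← Complex.exp_sum]
  have hL : ∀ x y : ℝ, L (x, y) = x * L (1, 0) + y * L (0, 1) := by
    intro x y
    have : ((x, y) : ℝ × ℝ) = x • (1, 0) + y • (0, 1) := by simp
    rw [this, map_add, map_smul, map_smul]; simp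
  set a := L (1, 0)
  set b := L (0, 1)
  have e1 : ∀ i : Fin m, (L ∘L A ∘L (ContinuousLinearMap.single ℝ (fun _ : Fin m => ℝ) i)) 1 
      = u i * a + v i * b := by
    intro i
    simp [A, hL, Pi.single_apply]
  have e2 : (L ∘L B ∘L ContinuousLinearMap.inl ℝ ℝ ℝ) 1 = -a - ρ * b := by
    simp [B, hL]; ring
  have e3 : (L ∘L B ∘L ContinuousLinearMap.inr ℝ ℝ ℝ) 1 = - s * b := by
    simp [B, hL]
  simp only [ContinuousLinearMap.comp_assoc]
  simp_rw [e1, e2, e3]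
  norm_cast
  congr 1
  have : ∑ i, -(u i * a + v i * b)^2/2 = -((∑ i, u i ^2) * a^2 + 2 * ρ * a * b + (∑ i, v i ^2) * b^2)/2 := by
    rw [hρ]
    simp only [Finset.sum_mul, Finset.mul_sum, ← Finset.sum_add_distrib, ← Finset.sum_neg_distrib, Finset.sum_div]
    exact Finset.sum_congr rfl fun i _ => by ring
  rw [this, hu, hv]
  linear_combination (b^2/2) * hs

lemma aux_rint : ∫⁻ r in Set.Ioi (0:ℝ), ENNReal.ofReal (r * Real.exp (-(1/2) * r^2)) = 1 := by
  have hd : ∀ x ∈ Set.Ici (0:ℝ), HasDerivAt (fun r => -Real.exp (-(1/2) * r^2)) (x * Real.exp (-(1/2) * x^2)) x := by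
    intro x _
    have h := (((hasDerivAt_pow 2 x).const_mul (-(1/2):ℝ)).exp).neg
    exact h.congr_deriv (by simp; ring)
  have ht : Filter.Tendsto (fun r:ℝ => -Real.exp (-(1/2) * r^2)) Filter.atTop (nhds 0) := by
    rw [← neg_zero]
    refine (Real.tendsto_exp_atBot.comp ?_).neg
    exact (Filter.tendsto_pow_atTop two_ne_zero).const_mul_atTop_of_neg (by norm_num)
  have hp : ∀ x ∈ Set.Ioi (0:ℝ), 0 ≤ x * Real.exp (-(1/2) * x^2) := by
    intro x hx; have : 0 < x := hx; positivity
  have hi := integrableOn_Ioi_deriv_of_nonneg' hd hp ht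
  have := integral_Ioi_of_hasDerivAt_of_nonneg' hd hp ht
  rw [← ofReal_integral_eq_lintegral_ofReal hi ((ae_restrict_iff' measurableSet_Ioi).2 (.of_forall hp)), this]
  simp

lemma aux_sheppard (θ : ℝ) (h1 : -(Real.pi/2) ≤ θ) (h2 : θ ≤ Real.pi/2) :
    ENNReal.ofReal ((Real.pi/2 + θ)/(2*Real.pi)) ≤
    ((gaussianReal 0 1).prod (gaussianReal 0 1))
      {p : ℝ × ℝ | 0 ≤ p.1 ∧ 0 ≤ Real.sin θ * p.1 + Real.cos θ * p.2} := by
  have hpi := Real.pi_pos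
  set S := {p : ℝ × ℝ | 0 ≤ p.1 ∧ 0 ≤ Real.sin θ * p.1 + Real.cos θ * p.2} with hS
  have hSm : MeasurableSet S := by
    apply MeasurableSet.inter
    · exact measurableSet_le measurable_const measurable_fst
    · exact measurableSet_le (f := fun _ => (0:ℝ)) (g := fun p : ℝ × ℝ => Real.sin θ * p.1 + Real.cos θ * p.2) measurable_const (by fun_prop)
  rw [gaussianReal_of_var_ne_zero _ one_ne_zero, prod_withDensity (measurable_gaussianPDF _ _) (measurable_gaussianPDF _ _), withDensity_apply _ hSm, ← lintegral_indicator hSm, ← Measure.volume_eq_prod, ← lintegral_comp_polarCoord_symm, polarCoord_target]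
  calc ENNReal.ofReal ((Real.pi/2 + θ)/(2*Real.pi)) 
      = ∫⁻ p in Set.Ioi (0:ℝ) ×ˢ Set.Ioo (-θ) (Real.pi/2), ENNReal.ofReal (p.1 * Real.exp (-(1/2) * p.1^2)) * ENNReal.ofReal (1/(2*Real.pi)) := by
        rw [Measure.volume_eq_prod, ← Measure.prod_restrict, lintegral_prod_mul (f := fun r : ℝ => ENNReal.ofReal (r * Real.exp (-(1/2) * r^2))) (g := fun _ => ENNReal.ofReal (1/(2*Real.pi))) (by fun_prop) (by fun_prop), aux_rint]
        simp only [lintegral_const, one_mul, Measure.restrict_apply MeasurableSet.univ, Set.univ_inter, Real.volume_Ioo]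
        rw [← ENNReal.ofReal_mul (by positivity)]
        congr 1
        ring
    _ ≤ ∫⁻ p in Set.Ioi (0:ℝ) ×ˢ Set.Ioo (-θ) (Real.pi/2), ENNReal.ofReal p.1 • S.indicator (fun p : ℝ × ℝ => gaussianPDF 0 1 p.1 * gaussianPDF 0 1 p.2) (polarCoord.symm p) := by
        refine setLIntegral_mono' (measurableSet_Ioi.prod measurableSet_Ioo) ?_
        rintro ⟨r, φ⟩ ⟨hr, hφ1, hφ2⟩
        have hr : 0 < r := hr
        simp only at hφ1 hφ2
        have hmem : polarCoord.symm (r, φ) ∈ S := by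
          rw [polarCoord_symm_apply, hS]
          refine ⟨mul_nonneg hr.le (Real.cos_nonneg_of_mem_Icc ⟨by linarith, by linarith⟩), ?_⟩
          have : Real.sin θ * (r * Real.cos φ) + Real.cos θ * (r * Real.sin φ) = r * Real.sin (θ + φ) := by
            rw [Real.sin_add]; ring
          simp only [this]
          exact mul_nonneg hr.le (Real.sin_nonneg_of_nonneg_of_le_pi (by linarith) (by linarith))
        rw [Set.indicator_of_mem hmem, polarCoord_symm_apply]
        simp only [gaussianPDF, smul_eq_mul]
        rw [← ENNReal.ofReal_mul (by positivity), ← ENNReal.ofReal_mul (gaussianPDFReal_nonneg _ _ _), ← ENNReal.ofReal_mul hr.le]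
        apply le_of_eq
        congr 1
        simp only [gaussianPDFReal, NNReal.coe_one, mul_one, sub_zero]
        have e : Real.exp (-(1/2) * r^2) = Real.exp (-(r * Real.cos φ) ^ 2 / 2) * Real.exp (-(r * Real.sin φ) ^ 2 / 2) := by
          rw [← Real.exp_add]
          congr 1
          linear_combination (r^2/2) * Real.sin_sq_add_cos_sq φ
        have e2 : 1/(2*Real.pi) = (√(2*Real.pi))⁻¹ * (√(2*Real.pi))⁻¹ := by
          rw [← mul_inv, Real.mul_self_sqrt (by positivity)]; simp
        rw [e, e2]; ring
    _ ≤ _ := by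
        refine lintegral_mono_set (Set.prod_mono le_rfl ?_)
        intro x hx
        exact ⟨by linarith [hx.1], by linarith [hx.2]⟩

lemma aux_law (m : ℕ) (u : Fin m → ℝ) (hu : ∑ i, u i ^ 2 = 1) :
    (Measure.pi fun _ : Fin m => gaussianReal 0 1).map (fun g => ∑ i, u i * g i) =
      gaussianReal 0 1 := by
  have h := aux_pair_law m u u hu hu 0 (by simp [← sq, hu])
  have h' := congrArg (Measure.map Prod.fst) h
  rw [Measure.map_map measurable_fst (by fun_prop), Measure.map_map measurable_fst (by fun_prop)] at h'
  have e : (Prod.fst ∘ fun p : ℝ × ℝ => (-p.1, -((∑ i, u i * u i) * p.1 + 0 * p.2)))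
    = (fun x => -x) ∘ Prod.fst := rfl
  rw [e, ← Measure.map_map measurable_neg measurable_fst, Measure.map_fst_prod] at h'
  simp only [measure_univ, one_smul, gaussianReal_map_neg, neg_zero] at h'
  exact h'

lemma aux_half : (gaussianReal 0 1).real (Set.Iic 0) ≤ 1 / 2 := by
  have : NullSingletonClass (gaussianReal 0 1) := nullSingletonClass_gaussianReal one_ne_zero
  have h1 : (gaussianReal 0 1).real (Set.Iic 0) = (gaussianReal 0 1).real (Set.Ioi 0) := by
    have h : (gaussianReal 0 1).map (fun x => -x) = gaussianReal 0 1 := by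
      simp [gaussianReal_map_neg]
    have h2 : (gaussianReal 0 1) (Set.Iic 0) = (gaussianReal 0 1) (Set.Ici 0) := by
      conv_lhs => rw [← h]
      rw [Measure.map_apply (by fun_prop) measurableSet_Iic]
      congr 1
      ext x; simp
    rw [measureReal_def, measureReal_def, h2, measure_congr Ioi_ae_eq_Ici]
  have h2 := probReal_compl_eq_one_sub (μ := gaussianReal 0 1) (measurableSet_Iic (a := (0:ℝ)))
  rw [Set.compl_Iic] at h2
  linarith

lemma aux_strip (c : ℝ) (hc : 0 ≤ c) :
    (gaussianReal 0 1).real (Set.Ioc (-c) 0) ≤ c / √(2 * Real.pi) := by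
  have h : gaussianReal 0 1 (Set.Ioc (-c) 0) ≤ ENNReal.ofReal (c / √(2 * Real.pi)) := by
    rw [gaussianReal_apply _ one_ne_zero]
    calc _ ≤ ∫⁻ x in Set.Ioc (-c) 0, ENNReal.ofReal (1 / √(2 * Real.pi)) := by
          refine lintegral_mono fun x => ?_
          refine ENNReal.ofReal_le_ofReal ?_
          simp only [gaussianPDFReal, NNReal.coe_one, mul_one, sub_zero, one_div]
          refine mul_le_of_le_one_right (by positivity) (Real.exp_le_one_iff.2 ?_)
          have := sq_nonneg x
          linarith
      _ = _ := by
          rw [setLIntegral_const, Real.volume_Ioc, ← ENNReal.ofReal_mul (by positivity)]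
          congr 1
          ring
  exact ENNReal.toReal_le_of_le_ofReal (by positivity) h

lemma aux_pair (m : ℕ) (u v : Fin m → ℝ) (hu : ∑ i, u i ^ 2 = 1) (hv : ∑ i, v i ^ 2 = 1)
    (ε : ℝ) (hε : 0 < ε) :
    1 / (2 * Real.pi) * Real.arcsin (∑ i, u i * v i) - 3 / √(2 * Real.pi) * ε ≤
    ∫ g : Fin m → ℝ, ((if (∑ i, u i * g i) ≤ -(3 * ε) then (1 : ℝ) else 0) - 1 / 2) *
      ((if (∑ i, v i * g i) ≤ -(3 * ε) then (1 : ℝ) else 0) - 1 / 2)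
        ∂(Measure.pi fun _ : Fin m => gaussianReal 0 1) := by
  have hpi := Real.pi_pos
  set μ := Measure.pi fun _ : Fin m => gaussianReal 0 1 with hμ
  set X : (Fin m → ℝ) → ℝ := fun g => ∑ i, u i * g i with hX
  set Y : (Fin m → ℝ) → ℝ := fun g => ∑ i, v i * g i with hY
  have mX : Measurable X := by fun_prop
  have mY : Measurable Y := by fun_prop
  set ρ := ∑ i, u i * v i with hρ
  have hρ2 : ρ ^ 2 ≤ 1 := by
    have := Finset.sum_mul_sq_le_sq_mul_sq Finset.univ u v
    rwa [hu, hv, mul_one] at this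
  have hρ1 := abs_le.1 ((sq_le_one_iff_abs_le_one ρ).1 hρ2)
  have hBB : 1 / 4 + 1 / (2 * Real.pi) * Real.arcsin ρ ≤ μ.real {g | X g ≤ 0 ∧ Y g ≤ 0} := by
    have hl := aux_pair_law m u v hu hv (Real.cos (Real.arcsin ρ)) (by
      have := Real.sin_sq_add_cos_sq (Real.arcsin ρ)
      rwa [Real.sin_arcsin hρ1.1 hρ1.2] at this)
    have hs := aux_sheppard (Real.arcsin ρ) (Real.neg_pi_div_two_le_arcsin _)
      (Real.arcsin_le_pi_div_two _)
    rw [Real.sin_arcsin hρ1.1 hρ1.2] at hs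
    have hT : MeasurableSet {p : ℝ × ℝ | p.1 ≤ 0 ∧ p.2 ≤ 0} :=
      (measurableSet_le measurable_fst measurable_const).inter
        (measurableSet_le measurable_snd measurable_const)
    have h1 := DFunLike.congr_fun hl {p : ℝ × ℝ | p.1 ≤ 0 ∧ p.2 ≤ 0}
    rw [Measure.map_apply (by fun_prop) hT, Measure.map_apply (by fun_prop) hT] at h1
    change μ {g | X g ≤ 0 ∧ Y g ≤ 0} = ((gaussianReal 0 1).prod (gaussianReal 0 1))
      {p : ℝ × ℝ | -p.1 ≤ 0 ∧ -(ρ * p.1 + Real.cos (Real.arcsin ρ) * p.2) ≤ 0} at h1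
    simp only [neg_nonpos] at h1
    rw [← h1] at hs
    have := (ENNReal.ofReal_le_iff_le_toReal (measure_ne_top _ _)).1 hs
    refine le_trans (le_of_eq ?_) this
    field_simp
    ring
  have hone : ∀ (a : Fin m → ℝ), ∑ i, a i ^ 2 = 1 → 
      μ.real {g | ∑ i, a i * g i ≤ 0} ≤ 1 / 2 ∧ 
      μ.real {g | -(3 * ε) < ∑ i, a i * g i ∧ ∑ i, a i * g i ≤ 0} ≤ 3 * ε / √(2 * Real.pi) := by
    intro a ha
    have hl := aux_law m a ha
    have h1 := aux_half
    have h2 := aux_strip (3 * ε) (by positivity)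
    rw [← hl, map_measureReal_apply (by fun_prop) (by measurability)] at h1 h2
    exact ⟨h1, h2⟩
  obtain ⟨hX1, hX2⟩ := hone u hu
  obtain ⟨hY1, hY2⟩ := hone v hv
  set SB := {g | X g ≤ 0 ∧ Y g ≤ 0}
  set SX := {g | X g ≤ 0}
  set SY := {g | Y g ≤ 0}
  set DX := {g | -(3 * ε) < X g ∧ X g ≤ 0}
  set DY := {g | -(3 * ε) < Y g ∧ Y g ≤ 0}
  have mSX : MeasurableSet SX := measurableSet_le mX measurable_const
  have mSY : MeasurableSet SY := measurableSet_le mY measurable_const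
  have mSB : MeasurableSet SB := mSX.inter mSY
  have mDX : MeasurableSet DX := (measurableSet_lt measurable_const mX).inter mSX
  have mDY : MeasurableSet DY := (measurableSet_lt measurable_const mY).inter mSY
  have hint : ∀ S : Set (Fin m → ℝ), MeasurableSet S → Integrable (S.indicator (1 : (Fin m → ℝ) → ℝ)) μ :=
    fun S hS => (integrable_const (1:ℝ)).indicator hS
  have key : ∫ g, (SB.indicator (1 : (Fin m → ℝ) → ℝ) g - 1/2 * DX.indicator (1 : (Fin m → ℝ) → ℝ) g
      - 1/2 * DY.indicator (1 : (Fin m → ℝ) → ℝ) g - 1/2 * SX.indicator (1 : (Fin m → ℝ) → ℝ) g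
      - 1/2 * SY.indicator (1 : (Fin m → ℝ) → ℝ) g + 1/4) ∂μ = 
      μ.real SB - 1/2 * μ.real DX - 1/2 * μ.real DY - 1/2 * μ.real SX - 1/2 * μ.real SY + 1/4 := by
    have i1 := hint _ mSB
    have i2 := (hint _ mDX).const_mul (1/2)
    have i3 := (hint _ mDY).const_mul (1/2)
    have i4 := (hint _ mSX).const_mul (1/2)
    have i5 := (hint _ mSY).const_mul (1/2)
    have q : ∀ {f h : (Fin m → ℝ) → ℝ}, Integrable f μ → Integrable h μ →
      Integrable (fun g => f g - h g) μ := fun hf hh => hf.sub hh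
    rw [integral_add (q (q (q (q i1 i2) i3) i4) i5) (integrable_const _),
      integral_sub (q (q (q i1 i2) i3) i4) i5, integral_sub (q (q i1 i2) i3) i4,
      integral_sub (q i1 i2) i3, integral_sub i1 i2]
    simp only [integral_const_mul, integral_indicator_one, mSB, mDX, mDY, mSX, mSY]
    simp
  have hmono : ∫ g, (SB.indicator (1 : (Fin m → ℝ) → ℝ) g - 1/2 * DX.indicator (1 : (Fin m → ℝ) → ℝ) g
      - 1/2 * DY.indicator (1 : (Fin m → ℝ) → ℝ) g - 1/2 * SX.indicator (1 : (Fin m → ℝ) → ℝ) g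
      - 1/2 * SY.indicator (1 : (Fin m → ℝ) → ℝ) g + 1/4) ∂μ ≤ 
      ∫ g, ((if X g ≤ -(3 * ε) then (1 : ℝ) else 0) - 1 / 2) *
      ((if Y g ≤ -(3 * ε) then (1 : ℝ) else 0) - 1 / 2) ∂μ := by
    refine integral_mono ?_ ?_ ?_
    · exact ((((((hint _ mSB).sub ((hint _ mDX).const_mul (1/2))).sub ((hint _ mDY).const_mul (1/2))).sub
        ((hint _ mSX).const_mul (1/2))).sub ((hint _ mSY).const_mul (1/2)))).add (integrable_const _)
    · refine Integrable.of_bound (C := 1) ?_ (.of_forall fun g => ?_)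
      · refine Measurable.aestronglyMeasurable ?_
        exact ((Measurable.ite (measurableSet_le mX measurable_const) measurable_const
          measurable_const).sub_const _).mul ((Measurable.ite (measurableSet_le mY measurable_const)
          measurable_const measurable_const).sub_const _)
      · split_ifs <;> norm_num
    · intro g
      simp only [Set.indicator_apply, SB, SX, SY, DX, DY, Set.mem_ofPred_eq, Pi.one_apply]
      by_cases h1 : X g ≤ -(3 * ε) <;> by_cases h2 : Y g ≤ -(3 * ε) <;>
      by_cases h3 : X g ≤ 0 <;> by_cases h4 : Y g ≤ 0 <;>
      first
      | (exfalso; linarith)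
      | (simp [h1, h2, h3, h4, not_lt.2, not_le.1]; try norm_num)
  rw [key] at hmono
  refine le_trans ?_ hmono
  have : 3 / √(2 * Real.pi) * ε = 3 * ε / √(2 * Real.pi) := by ring
  rw [this]
  have hX1' : μ.real SX ≤ 1/2 := hX1
  have hY1' : μ.real SY ≤ 1/2 := hY1
  have hX2' : μ.real DX ≤ 3 * ε / √(2 * Real.pi) := hX2
  have hY2' : μ.real DY ≤ 3 * ε / √(2 * Real.pi) := hY2
  linarith

/-- Second-moment lower bound: for unit vectors `u_1, …, u_d` in `ℝ^m`, a standard Gaussian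
`g ~ N(0, I_m)`, nonnegative weights `w` with total weight `W`, and `ε > 0`, the random
variable `Z = Σ_j w_j 1(⟨u_j, g⟩ ≤ -3ε)` satisfies
`E[(Z - W/2)²] ≥ (1/(2π)) Σ_{j,k} w_j w_k arcsin⟨u_j, u_k⟩ - (3/√(2π)) ε W²`. -/
theorem second_moment_indicator_lower_bound (m d : ℕ)
    (u : Fin d → (Fin m → ℝ)) (hu : ∀ j, ∑ i, u j i ^ 2 = 1)
    (w : Fin d → ℝ) (hw : ∀ j, 0 ≤ w j) (W : ℝ) (hW : W = ∑ j, w j)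
    (ε : ℝ) (hε : 0 < ε) :
    (∫ g : Fin m → ℝ,
        ((∑ j, w j * (if (∑ i, u j i * g i) ≤ -(3 * ε) then (1 : ℝ) else 0)) - W / 2) ^ 2
          ∂(Measure.pi fun _ : Fin m => gaussianReal 0 1)) ≥
      (1 / (2 * Real.pi)) * ∑ j, ∑ k, w j * w k * Real.arcsin (∑ i, u j i * u k i) -
        (3 / Real.sqrt (2 * Real.pi)) * ε * W ^ 2 := by
  have hint : ∀ j k, Integrable (fun g : Fin m → ℝ =>
      w j * w k * (((if (∑ i, u j i * g i) ≤ -(3 * ε) then (1 : ℝ) else 0) - 1 / 2) *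
      ((if (∑ i, u k i * g i) ≤ -(3 * ε) then (1 : ℝ) else 0) - 1 / 2)))
      (Measure.pi fun _ : Fin m => gaussianReal 0 1) := by
    intro j k
    refine Integrable.const_mul ?_ _
    refine Integrable.of_bound (C := 1) ?_ (.of_forall fun g => ?_)
    · refine Measurable.aestronglyMeasurable ?_
      have hm : ∀ j, MeasurableSet {g : Fin m → ℝ | ∑ i, u j i * g i ≤ -(3 * ε)} :=
        fun j => measurableSet_le (by fun_prop) measurable_const
      exact ((Measurable.ite (hm j) measurable_const
          measurable_const).sub_const _).mul ((Measurable.ite (hm k)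
          measurable_const measurable_const).sub_const _)
    · split_ifs <;> norm_num
  have e : ∀ g : Fin m → ℝ,
      ((∑ j, w j * (if (∑ i, u j i * g i) ≤ -(3 * ε) then (1 : ℝ) else 0)) - W / 2) ^ 2 =
      ∑ j, ∑ k, w j * w k * (((if (∑ i, u j i * g i) ≤ -(3 * ε) then (1 : ℝ) else 0) - 1 / 2) *
      ((if (∑ i, u k i * g i) ≤ -(3 * ε) then (1 : ℝ) else 0) - 1 / 2)) := by
    intro g
    have : (∑ j, w j * (if (∑ i, u j i * g i) ≤ -(3 * ε) then (1 : ℝ) else 0)) - W / 2 =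
        ∑ j, w j * ((if (∑ i, u j i * g i) ≤ -(3 * ε) then (1 : ℝ) else 0) - 1 / 2) := by
      rw [hW, Finset.sum_div, ← Finset.sum_sub_distrib]
      exact Finset.sum_congr rfl fun j _ => by ring
    rw [this, sq, Finset.sum_mul_sum]
    exact Finset.sum_congr rfl fun j _ => Finset.sum_congr rfl fun k _ => by ring
  simp_rw [e]
  rw [integral_finsetSum _ fun j _ => integrable_finsetSum _ fun k _ => hint j k]
  simp_rw [integral_finsetSum _ fun k _ => hint _ k, integral_const_mul]
  have e2 : (1 / (2 * Real.pi)) * ∑ j, ∑ k, w j * w k * Real.arcsin (∑ i, u j i * u k i) -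
        (3 / Real.sqrt (2 * Real.pi)) * ε * W ^ 2 =
      ∑ j, ∑ k, w j * w k * (1 / (2 * Real.pi) * Real.arcsin (∑ i, u j i * u k i) -
        3 / Real.sqrt (2 * Real.pi) * ε) := by
    rw [hW, sq, Finset.sum_mul_sum]
    simp only [Finset.mul_sum, ← Finset.sum_sub_distrib]
    exact Finset.sum_congr rfl fun j _ => Finset.sum_congr rfl fun k _ => by ring
  rw [e2]
  refine Finset.sum_le_sum fun j _ => Finset.sum_le_sum fun k _ => ?_
  exact mul_le_mul_of_nonneg_left (aux_pair m (u j) (u k) (hu j) (hu k) ε hε)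
    (mul_nonneg (hw j) (hw k))
end

section
/- There exist absolute constants C, c > 0 such that the following holds for every integer d ≥ 2 and ε = 1/(C·d·√(log d)). Let i be a vertex with neighbors j = 1, …, d, let b_{ij} ∈ {−1,+1} and w_{ij} ≥ 0 for each neighbor j, and let W_i = Σ_{j=1}^d w_{ij}. Let v_i, v_1, …, v_d be unit vectors in ℝⁿ such that b_{ij}⟨v_i, v_j⟩ ∈ [ρ*−0.01, ρ*+0.01] for every j, and such that ‖a v_i − a_j v_j‖² + ‖a_j v_j − a_k v_k‖² ≥ ‖a v_i − a_k v_k‖² for every pair j ≠ k and all signs a, a_j, a_k ∈ {−1,+1}. Let g ~ N(0, I_n), set x_i = sgn(⟨g, v_i⟩), let B_i = {j : b_{ij} x_i ⟨g, v_j⟩ ≤ −ε}, and let Δ_i = max(0, 2·Σ_{j∈B_i} w_{ij} − W_i). Then E[Δ_i | |⟨g, v_i⟩| < ε] ≥ c · W_i/(d·√(log d)). -/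
open MeasureTheory ProbabilityTheory

/-- The Goemans–Williamson ratio function `f(ρ) = (1 + (2/π) arcsin ρ)/(1+ρ)`. -/
noncomputable def gwRatio (ρ : ℝ) : ℝ := (1 + 2 / Real.pi * Real.arcsin ρ) / (1 + ρ)


noncomputable def bet : ℕ → ℝ
  | 0 => 1
  | n + 1 => bet n * ((2 * n + 1) / (2 * n + 2))

lemma bet_pos (n : ℕ) : 0 < bet n := by
  induction n with
  | zero => simp [bet]
  | succ n ih => rw [bet]; positivity

lemma bet_lower (n : ℕ) : 1 ≤ 4 * ((n : ℝ) + 1) * bet (n + 1) ^ 2 := by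
  induction n with
  | zero => norm_num [bet]
  | succ n ih =>
    have e : 4 * (((n + 1 : ℕ) : ℝ) + 1) * bet (n + 1 + 1) ^ 2 = (4 * ((n : ℝ) + 1) * bet (n + 1) ^ 2) * ((2 * n + 3) ^ 2 / (4 * (n + 1) * (n + 2))) := by
      rw [bet]
      push_cast
      field_simp
      ring
    rw [e]
    refine one_le_mul_of_one_le_of_one_le ih ?_
    rw [one_le_div (by positivity)]
    nlinarith

lemma bet_choose (n : ℕ) : ((bet n : ℝ) : ℂ) = Ring.choose ((1 / 2 : ℂ) + n - 1) n := by
  rw [← Ring.multichoose_eq]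
  have h := fun n => Ring.factorial_nsmul_multichoose_eq_ascPochhammer (1 / 2 : ℂ) n
  induction n with
  | zero => simp [bet]
  | succ n ih =>
    have h1 := h n
    have h2 := h (n + 1)
    rw [ascPochhammer_succ_right, Polynomial.smeval_mul, ← h1] at h2
    simp only [Polynomial.smeval_add, Polynomial.smeval_X, Polynomial.smeval_natCast, pow_one, pow_zero, nsmul_eq_mul, mul_one, Nat.factorial_succ] at h2
    have h3 : (n.factorial : ℂ) ≠ 0 := by exact_mod_cast n.factorial_ne_zero
    have h4 : ((n : ℂ) + 1) ≠ 0 := by exact_mod_cast n.succ_ne_zero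
    rw [bet]
    push_cast at h2 ⊢
    rw [ih]
    have h5 : ((n : ℂ) + 1) * Ring.multichoose (1 / 2 : ℂ) (n + 1) = Ring.multichoose (1 / 2 : ℂ) n * (1 / 2 + n) := by
      apply mul_left_cancel₀ h3
      linear_combination h2
    have h6 : (2 * (n : ℂ) + 2) ≠ 0 := by
      intro h; apply h4; linear_combination h / 2
    field_simp
    linear_combination -2 * h5

lemma bet_hasSum (y : ℝ) (h0 : 0 ≤ y) (h1 : y < 1) :
    HasSum (fun n => bet n * y ^ n) (1 / Real.sqrt (1 - y)) := by
  have h := (Complex.one_div_one_sub_cpow_hasFPowerSeriesOnBall_zero (1 / 2)).hasSum (y := (y : ℂ))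
    (by simp; simpa [enorm_eq_nnnorm, ← NNReal.coe_lt_coe, abs_of_nonneg h0] using h1)
  simp only [FormalMultilinearSeries.ofScalars_apply_eq, ← bet_choose, zero_add, smul_eq_mul] at h
  have e : (1 / (1 - (y : ℂ)) ^ (1 / 2 : ℂ)) = ((1 / Real.sqrt (1 - y) : ℝ) : ℂ) := by
    rw [Real.sqrt_eq_rpow]
    push_cast [Complex.ofReal_cpow (by linarith : 0 ≤ 1 - y)]
    rfl
  rw [e] at h
  exact_mod_cast h

lemma psd_pow {ι κ : Type*} [Fintype ι] [Fintype κ] [DecidableEq κ] (w : ι → ℝ) (y : ι → κ → ℝ) (p : ℕ) :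
    0 ≤ ∑ j, ∑ k, w j * w k * (∑ i, y j i * y k i) ^ p := by
  have : ∑ j, ∑ k, w j * w k * (∑ i, y j i * y k i) ^ p
      = ∑ f : Fin p → κ, (∑ j, w j * ∏ l, y j (f l)) ^ 2 := by
    simp_rw [sq, Finset.sum_mul_sum]
    rw [Finset.sum_comm]
    simp_rw [Finset.sum_comm (s := (Finset.univ : Finset (Fin p → κ)))]
    rw [Finset.sum_comm]
    refine Finset.sum_congr rfl fun j _ => Finset.sum_congr rfl fun k _ => ?_
    have : (∑ i, y j i * y k i) ^ p = ∏ l : Fin p, ∑ i, y j i * y k i := by simp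
    rw [this, Finset.prod_univ_sum, Finset.mul_sum]
    simp only [Fintype.piFinset_univ, Finset.prod_mul_distrib]
    refine Finset.sum_congr rfl fun f _ => by ring
  rw [this]; positivity

lemma arcsin_psd {ι κ : Type*} [Fintype ι] [Fintype κ] [DecidableEq κ] (w : ι → ℝ) (y : ι → κ → ℝ)
    (c : ι → ι → ℝ) (hcy : ∀ j k, c j k = ∑ i, y j i * y k i) (hc : ∀ j k, |c j k| ≤ 1) (s : Finset ℕ) :
    ∑ m ∈ s, bet m / (2 * m + 1) * (∑ j, ∑ k, w j * w k * c j k ^ (2 * m + 1)) ≤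
      ∑ j, ∑ k, w j * w k * Real.arcsin (c j k) := by
  set F : ℝ → ℝ := fun r => (∑ j, ∑ k, w j * w k * Real.arcsin (r * c j k)) -
    ∑ m ∈ s, bet m / (2 * m + 1) * r ^ (2 * m + 1) * (∑ j, ∑ k, w j * w k * c j k ^ (2 * m + 1)) with hF
  have hbd : ∀ r ∈ Set.Ioo (0 : ℝ) 1, ∀ j k, (r * c j k) ^ 2 < 1 := by
    intro r hr j k
    rw [sq_lt_one_iff_abs_lt_one, abs_mul, abs_of_pos hr.1]
    nlinarith [hr.1, hr.2, hc j k, abs_nonneg (c j k)]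
  have hder : ∀ r ∈ Set.Ioo (0 : ℝ) 1, HasDerivAt F
      ((∑ j, ∑ k, w j * w k * (1 / Real.sqrt (1 - (r * c j k) ^ 2) * c j k)) -
      ∑ m ∈ s, bet m * r ^ (2 * m) * (∑ j, ∑ k, w j * w k * c j k ^ (2 * m + 1))) r := by
    intro r hr
    refine HasDerivAt.sub ?_ ?_
    · refine HasDerivAt.fun_sum fun j _ => HasDerivAt.fun_sum fun k _ => HasDerivAt.const_mul _ ?_
      have h := hbd r hr j k
      have h1 := (Real.hasDerivAt_arcsin (x := r * c j k) (by intro h'; rw [h'] at h; norm_num at h)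
        (by intro h'; rw [h'] at h; norm_num at h))
      have h2 : HasDerivAt (fun r => r * c j k) (c j k) r := by
        simpa using (hasDerivAt_id r).mul_const (c j k)
      exact h1.comp r h2
    · refine HasDerivAt.fun_sum fun m _ => HasDerivAt.mul_const ?_ _
      have h := (hasDerivAt_pow (2 * m + 1) r).const_mul (bet m / (2 * m + 1))
      convert h using 1
      have : (2 * (m : ℝ) + 1) ≠ 0 := by positivity
      push_cast
      field_simp
  have hmono : MonotoneOn F (Set.Icc 0 1) := by
    refine monotoneOn_of_deriv_nonneg (convex_Icc 0 1) ?_ ?_ ?_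
    · apply Continuous.continuousOn
      have := Real.continuous_arcsin
      fun_prop
    · rw [interior_Icc]
      exact fun r hr => (hder r hr).differentiableAt.differentiableWithinAt
    · rw [interior_Icc]
      intro r hr
      rw [(hder r hr).deriv, sub_nonneg]
      have hs : HasSum (fun m => bet m * r ^ (2 * m) * (∑ j, ∑ k, w j * w k * c j k ^ (2 * m + 1)))
          (∑ j, ∑ k, w j * w k * (1 / Real.sqrt (1 - (r * c j k) ^ 2) * c j k)) := by
        have : (fun m => bet m * r ^ (2 * m) * (∑ j, ∑ k, w j * w k * c j k ^ (2 * m + 1))) =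
            fun m => ∑ j, ∑ k, w j * w k * ((bet m * ((r * c j k) ^ 2) ^ m) * c j k) := by
          ext m
          simp_rw [Finset.mul_sum]
          refine Finset.sum_congr rfl fun j _ => Finset.sum_congr rfl fun k _ => ?_
          ring
        rw [this]
        refine hasSum_sum fun j _ => hasSum_sum fun k _ => HasSum.mul_left _ (HasSum.mul_right _ ?_)
        exact bet_hasSum _ (sq_nonneg _) (hbd r hr j k)
      refine sum_le_hasSum s (fun m _ => ?_) hs
      have := psd_pow w y (2 * m + 1)
      simp_rw [← hcy] at this
      have h2 := bet_pos m
      have h3 := hr.1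
      positivity
  have h := hmono (Set.left_mem_Icc.2 zero_le_one) (Set.right_mem_Icc.2 zero_le_one) zero_le_one
  simp only [hF] at h
  simp at h
  linarith

lemma quad_lower (d : ℕ) (hd : 2 ≤ d) (w : Fin d → ℝ) (hw : ∀ j, 0 ≤ w j) (c : Fin d → Fin d → ℝ)
    (hdiag : ∀ j, c j j = 1) (hneg : ∀ j k, -(21 / 25) ≤ c j k) (m : ℕ)
    (hm : 6 * Real.log d ≤ m) :
    (∑ j, w j) ^ 2 / (2 * d) ≤ ∑ j, ∑ k, w j * w k * c j k ^ (2 * m + 1) := by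
  have hd0 : (2 : ℝ) ≤ d := by exact_mod_cast hd
  have hη : (21 / 25 : ℝ) ^ (2 * m + 1) ≤ 1 / (2 * d) := by
    have h1 : (21 / 25 : ℝ) ^ (2 * m + 1) ≤ ((21 / 25) ^ 2) ^ m := by
      rw [pow_succ, pow_mul]
      have : (0 : ℝ) ≤ ((21 / 25) ^ 2) ^ m := by positivity
      nlinarith
    have h2 : ((21 / 25 : ℝ) ^ 2) ≤ Real.exp (-(1 / 3)) := by
      have h3 : ((21 / 25 : ℝ) ^ 2) ^ 3 ≤ Real.exp (-(1 / 3)) ^ 3 := by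
        rw [← Real.exp_nat_mul, show ((3 : ℕ) : ℝ) * (-(1 / 3)) = -1 by norm_num, Real.exp_neg]
        rw [le_inv_comm₀ (by norm_num) (Real.exp_pos _)]
        have := Real.exp_one_lt_d9
        norm_num at this ⊢
        linarith
      exact le_of_pow_le_pow_left₀ (by norm_num) (Real.exp_pos _).le h3
    calc (21 / 25 : ℝ) ^ (2 * m + 1) ≤ ((21 / 25) ^ 2) ^ m := h1
      _ ≤ Real.exp (-(1 / 3)) ^ m := by gcongr
      _ = Real.exp (-(m / 3)) := by rw [← Real.exp_nat_mul]; congr 1; ring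
      _ ≤ Real.exp (-(2 * Real.log d)) := by
          apply Real.exp_le_exp.2; linarith
      _ = 1 / (d * d) := by
          rw [Real.exp_neg, two_mul, Real.exp_add, Real.exp_log (by linarith)]; simp
      _ ≤ 1 / (2 * d) := by
          apply one_div_le_one_div_of_le (by linarith); nlinarith
  have hc : ∀ j k, (if j = k then 1 else 0) - 1 / (2 * d) ≤ c j k ^ (2 * m + 1) := by
    intro j k
    split_ifs with h
    · subst h; rw [hdiag, one_pow]
      have : (0 : ℝ) ≤ 1 / (2 * d) := by positivity
      linarith
    · have h1 : (-(21 / 25) : ℝ) ^ (2 * m + 1) ≤ c j k ^ (2 * m + 1) :=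
        (Odd.strictMono_pow ⟨m, rfl⟩).monotone (hneg j k)
      rw [Odd.neg_pow ⟨m, rfl⟩] at h1
      linarith
  have h2 : ∑ j, ∑ k, w j * w k * ((if j = k then 1 else 0) - 1 / (2 * d)) ≤
      ∑ j, ∑ k, w j * w k * c j k ^ (2 * m + 1) :=
    Finset.sum_le_sum fun j _ => Finset.sum_le_sum fun k _ =>
      mul_le_mul_of_nonneg_left (hc j k) (mul_nonneg (hw j) (hw k))
  refine le_trans ?_ h2
  have h3 : ∑ j, ∑ k, w j * w k * ((if j = k then 1 else 0) - 1 / (2 * d)) =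
      ∑ j, w j ^ 2 - (∑ j, w j) ^ 2 / (2 * d) := by
    simp_rw [mul_sub, Finset.sum_sub_distrib]
    congr 1
    · simp [sq]
    · rw [sq, Finset.sum_mul_sum, Finset.sum_div]
      simp_rw [Finset.sum_div]
      refine Finset.sum_congr rfl fun j _ => Finset.sum_congr rfl fun k _ => ?_
      ring
  rw [h3]
  have h4 : (∑ j, w j) ^ 2 ≤ d * ∑ j, w j ^ 2 := by
    simpa using sq_sum_le_card_mul_sum_sq (s := (Finset.univ : Finset (Fin d))) (f := w)
  have h5 : (∑ j, w j) ^ 2 / d ≤ ∑ j, w j ^ 2 := by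
    rw [div_le_iff₀ (by linarith)]; linarith
  have h6 : (∑ j, w j) ^ 2 / (2 * d) = (∑ j, w j) ^ 2 / d / 2 := by
    rw [div_div]; ring
  linarith

lemma bet_sum (L : ℝ) (hL : 1 / 2 ≤ L) :
    1 / (48 * Real.sqrt L) ≤ ∑ m ∈ Finset.Ico ⌈6 * L⌉₊ (2 * ⌈6 * L⌉₊), bet m / (2 * m + 1) := by
  set K := ⌈6 * L⌉₊ with hK
  have hK1 : 6 * L ≤ K := Nat.le_ceil _
  have hK2 : (K : ℝ) ≤ 8 * L := by
    have := Nat.ceil_lt_add_one (a := 6 * L) (by linarith)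
    linarith
  have hKpos : (3 : ℝ) ≤ K := by linarith
  have hs : 0 < Real.sqrt L := Real.sqrt_pos.2 (by linarith)
  have hsq : Real.sqrt L ^ 2 = L := Real.sq_sqrt (by linarith)
  have key : ∀ m ∈ Finset.Ico K (2 * K), 1 / (48 * Real.sqrt L * K) ≤ bet m / (2 * m + 1) := by
    intro m hm
    rw [Finset.mem_Ico] at hm
    have h1 : (K : ℝ) ≤ m := by exact_mod_cast hm.1
    have h2 : (m : ℝ) + 1 ≤ 2 * K := by exact_mod_cast hm.2
    obtain ⟨p, rfl⟩ : ∃ p, m = p + 1 := ⟨m - 1, by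
      have : 0 < m := by
        have : (0 : ℝ) < m := by linarith
        exact_mod_cast this
      omega⟩
    have hb := bet_lower p
    have hbp := bet_pos (p + 1)
    push_cast at *
    have h3 : 1 ≤ 8 * Real.sqrt L * bet (p + 1) := by
      have : (1 : ℝ) ^ 2 ≤ (8 * Real.sqrt L * bet (p + 1)) ^ 2 := by
        rw [mul_pow, mul_pow, hsq]
        nlinarith [sq_nonneg (bet (p + 1))]
      exact le_of_sq_le_sq this (by positivity)
    rw [div_le_div_iff₀ (by positivity) (by positivity)]
    nlinarith
  have h := Finset.card_nsmul_le_sum _ _ _ key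
  refine le_trans (le_of_eq ?_) h
  simp only [Nat.card_Ico, nsmul_eq_mul]
  rw [show 2 * K - K = K by omega]
  have : (K : ℝ) ≠ 0 := by linarith
  field_simp


lemma arcsin_lower (d : ℕ) (hd : 2 ≤ d) {κ : Type*} [Fintype κ] [DecidableEq κ] (w : Fin d → ℝ)
    (hw : ∀ j, 0 ≤ w j) (y : Fin d → κ → ℝ) (c : Fin d → Fin d → ℝ)
    (hcy : ∀ j k, c j k = ∑ i, y j i * y k i) (hc : ∀ j k, |c j k| ≤ 1)
    (hdiag : ∀ j, c j j = 1) (hneg : ∀ j k, -(21 / 25) ≤ c j k) :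
    (∑ j, w j) ^ 2 / (96 * (d * Real.sqrt (Real.log d))) ≤
      ∑ j, ∑ k, w j * w k * Real.arcsin (c j k) := by
  have hd0 : (2 : ℝ) ≤ d := by exact_mod_cast hd
  have hlog : 1 / 2 ≤ Real.log d := by
    have := Real.log_two_gt_d9
    have h2 := Real.log_le_log (by norm_num) hd0
    linarith
  refine le_trans ?_ (arcsin_psd w y c hcy hc (Finset.Ico ⌈6 * Real.log d⌉₊ (2 * ⌈6 * Real.log d⌉₊)))
  have h1 : ∀ m ∈ Finset.Ico ⌈6 * Real.log d⌉₊ (2 * ⌈6 * Real.log d⌉₊),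
      bet m / (2 * m + 1) * ((∑ j, w j) ^ 2 / (2 * d)) ≤
      bet m / (2 * m + 1) * (∑ j, ∑ k, w j * w k * c j k ^ (2 * m + 1)) := by
    intro m hm
    refine mul_le_mul_of_nonneg_left (quad_lower d hd w hw c hdiag hneg m ?_) ?_
    · exact (Nat.le_ceil _).trans (by exact_mod_cast (Finset.mem_Ico.1 hm).1)
    · have := bet_pos m; positivity
  refine le_trans ?_ (Finset.sum_le_sum h1)
  rw [← Finset.sum_mul]
  have h2 := mul_le_mul_of_nonneg_right (bet_sum _ hlog)
    (by positivity : 0 ≤ (∑ j, w j) ^ 2 / (2 * (d : ℝ)))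
  refine le_trans (le_of_eq ?_) h2
  have : Real.sqrt (Real.log d) ≠ 0 := (Real.sqrt_pos.2 (by linarith)).ne'
  field_simp
  ring

lemma gw_bounds (ρ : ℝ) (hρ : ρ ∈ Set.Ioc (-1 : ℝ) 1)
    (hmin : ∀ x ∈ Set.Ioc (-1 : ℝ) 1, gwRatio ρ ≤ gwRatio x) : 1 / 10 ≤ ρ ∧ ρ ≤ 49 / 50 + 1 / 1000 := by
  have hpi := Real.pi_pos
  have hs2 : (1.414 : ℝ) ≤ Real.sqrt 2 := by
    apply Real.le_sqrt_of_sq_le; norm_num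
  have hs2' : Real.sqrt 2 ≤ 1.415 := by
    apply Real.sqrt_le_iff.2; norm_num
  have h0 : gwRatio ρ ≤ 0.879 := by
    refine (hmin (Real.sqrt 2 / 2) ⟨by linarith, by linarith⟩).trans ?_
    rw [gwRatio, ← Real.sin_pi_div_four, Real.arcsin_sin (by linarith) (by linarith), Real.sin_pi_div_four]
    rw [div_le_iff₀ (by linarith)]
    field_simp
    linarith
  have h1 : 1 + 2 / Real.pi * Real.arcsin ρ ≤ 0.879 * (1 + ρ) := by
    rw [gwRatio, div_le_iff₀ (by linarith [hρ.1])] at h0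
    exact h0
  have hinv : 0 < 2 / Real.pi := by positivity
  have hpos : 0 ≤ ρ := by
    by_contra hneg
    push Not at hneg
    have h2 : -(Real.pi / 2) ≤ Real.arcsin ρ := Real.neg_pi_div_two_le_arcsin ρ
    have h3 : Real.arcsin ρ < 0 := Real.arcsin_lt_zero.2 hneg
    have h4 := Real.mul_le_sin (x := -Real.arcsin ρ) (by linarith) (by linarith)
    rw [Real.sin_neg, Real.sin_arcsin (by linarith [hρ.1]) hρ.2] at h4
    nlinarith [hρ.1]
  constructor
  · have h2 : 0 ≤ Real.arcsin ρ := Real.arcsin_nonneg.2 hpos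
    have : 0 ≤ 2 / Real.pi * Real.arcsin ρ := by positivity
    linarith
  · by_contra hbig
    push Not at hbig
    have h2 : Real.pi / 2 - Real.pi / 16 ≤ Real.arcsin ρ := by
      rw [Real.le_arcsin_iff_sin_le' ⟨by linarith, by linarith⟩, Real.sin_pi_div_two_sub, Real.cos_pi_div_sixteen]
      have ha : Real.sqrt (2 + Real.sqrt 2) ≤ 1.849 := by
        apply Real.sqrt_le_iff.2; constructor; norm_num; norm_num at *; linarith
      have hb : Real.sqrt (2 + Real.sqrt (2 + Real.sqrt 2)) ≤ 1.962 := by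
        apply Real.sqrt_le_iff.2; constructor; norm_num; norm_num at *; linarith
      linarith
    have h3 : 2 / Real.pi * (Real.pi / 2 - Real.pi / 16) ≤ 2 / Real.pi * Real.arcsin ρ := by gcongr
    have h4 : 2 / Real.pi * (Real.pi / 2 - Real.pi / 16) = 7 / 8 := by field_simp; norm_num
    linarith [hρ.2]

lemma sign_cos_integral (θ : ℝ) (h0 : 0 ≤ θ) (h1 : θ ≤ Real.pi) :
    ∫ φ in Set.Ioo (-Real.pi) Real.pi, Real.sign (Real.cos φ) * Real.sign (Real.cos (φ - θ)) =
      2 * (Real.pi - 2 * θ) := by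
  have hpi := Real.pi_pos
  set f : ℝ → ℝ := fun φ => Real.sign (Real.cos φ) * Real.sign (Real.cos (φ - θ)) with hf
  have hfm : Measurable f := by
    have hsm : Measurable Real.sign := by
      unfold Real.sign
      exact Measurable.ite measurableSet_Iio measurable_const (Measurable.ite measurableSet_Ioi measurable_const measurable_const)
    exact (hsm.comp (by fun_prop)).mul (hsm.comp (by fun_prop))
  have hsb : ∀ x : ℝ, |Real.sign x| ≤ 1 := by
    intro x
    rcases Real.sign_apply_eq x with h | h | h <;> rw [h] <;> norm_num
  have hfb : ∀ φ, ‖f φ‖ ≤ 1 := by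
    intro φ
    rw [Real.norm_eq_abs, abs_mul]
    exact mul_le_one₀ (hsb _) (abs_nonneg _) (hsb _)
  have hfi : ∀ a b, IntervalIntegrable f volume a b := by
    intro a b
    refine (intervalIntegrable_const (c := (1 : ℝ))).mono_fun hfm.aestronglyMeasurable ?_
    filter_upwards with φ
    simpa using hfb φ
  have hper : Function.Periodic f Real.pi := by
    intro φ
    simp only [hf]
    rw [show φ + Real.pi - θ = (φ - θ) + Real.pi by ring, Real.cos_add_pi, Real.cos_add_pi, Real.sign_neg, Real.sign_neg]
    ring
  rw [← integral_Ioc_eq_integral_Ioo, ← intervalIntegral.integral_of_le (by linarith)]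
  have e1 : ∫ φ in (-Real.pi)..Real.pi, f φ = 2 * ∫ φ in (-(Real.pi / 2))..(Real.pi / 2), f φ := by
    rw [← intervalIntegral.integral_add_adjacent_intervals (hfi (-Real.pi) 0) (hfi 0 Real.pi)]
    have a1 := hper.intervalIntegral_add_eq (-Real.pi) (-(Real.pi / 2))
    have a2 := hper.intervalIntegral_add_eq 0 (-(Real.pi / 2))
    rw [show -Real.pi + Real.pi = 0 by ring] at a1
    rw [zero_add] at a2
    rw [a1, a2, show -(Real.pi / 2) + Real.pi = Real.pi / 2 by ring]
    ring
  rw [e1, ← intervalIntegral.integral_add_adjacent_intervals (hfi (-(Real.pi / 2)) (θ - Real.pi / 2)) (hfi _ _)]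
  have e2 : ∫ φ in (-(Real.pi / 2))..(θ - Real.pi / 2), f φ = ∫ φ in (-(Real.pi / 2))..(θ - Real.pi / 2), (-1 : ℝ) := by
    rw [intervalIntegral.integral_of_le (by linarith), intervalIntegral.integral_of_le (by linarith),
      integral_Ioc_eq_integral_Ioo, integral_Ioc_eq_integral_Ioo]
    refine setIntegral_congr_fun measurableSet_Ioo fun φ hφ => ?_
    simp only [hf]
    rw [Real.sign_of_pos (Real.cos_pos_of_mem_Ioo ⟨hφ.1, by linarith [hφ.2]⟩), Real.sign_of_neg, one_mul]
    rw [← Real.cos_neg]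
    exact Real.cos_neg_of_pi_div_two_lt_of_lt (by linarith [hφ.2]) (by linarith [hφ.1])
  have e3 : ∫ φ in (θ - Real.pi / 2)..(Real.pi / 2), f φ = ∫ φ in (θ - Real.pi / 2)..(Real.pi / 2), (1 : ℝ) := by
    rw [intervalIntegral.integral_of_le (by linarith), intervalIntegral.integral_of_le (by linarith),
      integral_Ioc_eq_integral_Ioo, integral_Ioc_eq_integral_Ioo]
    refine setIntegral_congr_fun measurableSet_Ioo fun φ hφ => ?_
    simp only [hf]
    rw [Real.sign_of_pos (Real.cos_pos_of_mem_Ioo ⟨by linarith [hφ.1], by linarith [hφ.2]⟩), Real.sign_of_pos, one_mul]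
    exact Real.cos_pos_of_mem_Ioo ⟨by linarith [hφ.1], by linarith [hφ.2]⟩
  rw [e2, e3]
  simp
  ring

lemma polar_gauss (q : ℝ × ℝ → ℝ) (a : ℝ → ℝ)
    (hqa : ∀ r φ, 0 < r → q (r * Real.cos φ, r * Real.sin φ) = a φ) :
    ∫ p, q p ∂((gaussianReal 0 1).prod (gaussianReal 0 1)) =
      (∫ r in Set.Ioi (0 : ℝ), r * ((Real.sqrt (2 * Real.pi))⁻¹ ^ 2 * Real.exp (-r ^ 2 / 2))) *
        ∫ φ in Set.Ioo (-Real.pi) Real.pi, a φ := by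
  rw [gaussianReal_of_var_ne_zero 0 one_ne_zero, prod_withDensity (by fun_prop) (by fun_prop),
    integral_withDensity_eq_integral_toReal_smul (by fun_prop)
      (Filter.Eventually.of_forall fun p => ENNReal.mul_lt_top gaussianPDF_lt_top gaussianPDF_lt_top),
    ← Measure.volume_eq_prod, ← integral_comp_polarCoord_symm, polarCoord_target,
    Measure.volume_eq_prod, ← setIntegral_prod_mul, ← Measure.volume_eq_prod]
  refine setIntegral_congr_fun (measurableSet_Ioi.prod measurableSet_Ioo) fun p hp => ?_
  have hr : 0 < p.1 := hp.1
  simp only [polarCoord_symm_apply, ENNReal.toReal_mul, toReal_gaussianPDF, smul_eq_mul]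
  rw [hqa _ _ hr]
  simp only [gaussianPDFReal, NNReal.coe_one, mul_one, sub_zero]
  have : Real.exp (-p.1 ^ 2 / 2) = Real.exp (-(p.1 * Real.cos p.2) ^ 2 / 2) * Real.exp (-(p.1 * Real.sin p.2) ^ 2 / 2) := by
    rw [← Real.exp_add]; congr 1
    have := Real.sin_sq_add_cos_sq p.2
    linear_combination (p.1 ^ 2 / 2) * this
  rw [this]; ring

lemma real_sign_mul_pos (r x : ℝ) (hr : 0 < r) : Real.sign (r * x) = Real.sign x := by
  rcases lt_trichotomy x 0 with h | h | h
  · rw [Real.sign_of_neg h, Real.sign_of_neg (mul_neg_of_pos_of_neg hr h)]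
  · simp [h]
  · rw [Real.sign_of_pos h, Real.sign_of_pos (mul_pos hr h)]

lemma sheppard2 (θ : ℝ) (h0 : 0 ≤ θ) (h1 : θ ≤ Real.pi) :
    ∫ p : ℝ × ℝ, Real.sign p.1 * Real.sign (Real.cos θ * p.1 + Real.sin θ * p.2)
      ∂((gaussianReal 0 1).prod (gaussianReal 0 1)) = 2 / Real.pi * (Real.pi / 2 - θ) := by
  have hpi := Real.pi_pos
  have hR := polar_gauss (fun _ => 1) (fun _ => 1) (fun _ _ _ => rfl)
  rw [polar_gauss _ (fun φ => Real.sign (Real.cos φ) * Real.sign (Real.cos (φ - θ))),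
    sign_cos_integral θ h0 h1]
  · set R := ∫ r in Set.Ioi (0 : ℝ), r * ((Real.sqrt (2 * Real.pi))⁻¹ ^ 2 * Real.exp (-r ^ 2 / 2))
    simp at hR
    rw [max_eq_left (by linarith)] at hR
    have : R = 1 / (2 * Real.pi) := by
      field_simp; linarith
    rw [this]; field_simp
  · intro r φ hr
    simp only
    rw [show Real.cos θ * (r * Real.cos φ) + Real.sin θ * (r * Real.sin φ) = r * Real.cos (φ - θ) by
      rw [Real.cos_sub]; ring, real_sign_mul_pos _ _ hr, real_sign_mul_pos _ _ hr]

noncomputable abbrev stdG (n : ℕ) : Measure (Fin n → ℝ) := Measure.pi fun _ : Fin n => gaussianReal 0 1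

lemma char_lin (n : ℕ) (a : Fin n → ℝ) :
    ∫ g, Complex.exp (((∑ i, a i * g i : ℝ) : ℂ) * Complex.I) ∂(stdG n) =
      Complex.exp (-((∑ i, a i ^ 2 : ℝ) : ℂ) / 2) := by
  have h := charFun_stdGaussian (E := EuclideanSpace ℝ (Fin n)) (WithLp.toLp 2 a)
  rw [← map_pi_eq_stdGaussian, charFun_apply, integral_map (by fun_prop) (by fun_prop)] at h
  rw [← Complex.ofReal_pow, EuclideanSpace.real_norm_sq_eq] at h
  simpa [PiLp.inner_apply] using h

lemma lin_law (n : ℕ) (a : Fin n → ℝ) (ha : ∑ i, a i ^ 2 = 1) :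
    (stdG n).map (fun g => ∑ i, a i * g i) = gaussianReal 0 1 := by
  have hm : Measurable (fun g : Fin n → ℝ => ∑ i, a i * g i) := by fun_prop
  have := Measure.isProbabilityMeasure_map (μ := stdG n) hm.aemeasurable
  apply Measure.ext_of_charFun
  ext t
  rw [charFun_gaussianReal, charFun_apply_real, integral_map hm.aemeasurable (by fun_prop)]
  have h := char_lin n (fun i => t * a i)
  have e : ∑ i, (t * a i) ^ 2 = t ^ 2 := by
    simp_rw [mul_pow, ← Finset.mul_sum, ha, mul_one]
  rw [e] at h
  simp_rw [mul_assoc, ← Finset.mul_sum] at h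
  simp only [Complex.ofReal_mul] at h ⊢
  rw [h]
  simp [neg_div]

lemma pair_law (n m : ℕ) (a b : Fin n → ℝ) (a' b' : Fin m → ℝ)
    (h1 : ∑ i, a i ^ 2 = ∑ i, a' i ^ 2) (h2 : ∑ i, b i ^ 2 = ∑ i, b' i ^ 2)
    (h3 : ∑ i, a i * b i = ∑ i, a' i * b' i) :
    (stdG n).map (fun g => (∑ i, a i * g i, ∑ i, b i * g i)) =
      (stdG m).map (fun g => (∑ i, a' i * g i, ∑ i, b' i * g i)) := by
  have hm : Measurable (fun g : Fin n → ℝ => (∑ i, a i * g i, ∑ i, b i * g i)) := by fun_prop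
  have hm' : Measurable (fun g : Fin m → ℝ => (∑ i, a' i * g i, ∑ i, b' i * g i)) := by fun_prop
  have := Measure.isProbabilityMeasure_map (μ := stdG n) hm.aemeasurable
  have := Measure.isProbabilityMeasure_map (μ := stdG m) hm'.aemeasurable
  apply Measure.ext_of_charFunDual
  ext L
  rw [charFunDual_apply, charFunDual_apply, integral_map hm.aemeasurable (by fun_prop),
    integral_map hm'.aemeasurable (by fun_prop)]
  have hL : ∀ x y : ℝ, L (x, y) = L (1, 0) * x + L (0, 1) * y := by
    intro x y
    have : ((x, y) : ℝ × ℝ) = x • (1, 0) + y • (0, 1) := by simp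
    rw [this, map_add, map_smul, map_smul]
    simp [mul_comm]
  have key : ∀ (p : ℕ) (u v : Fin p → ℝ) (g : Fin p → ℝ), L (∑ i, u i * g i, ∑ i, v i * g i) =
      ∑ i, (L (1, 0) * u i + L (0, 1) * v i) * g i := by
    intro p u v g
    rw [hL, Finset.mul_sum, Finset.mul_sum, ← Finset.sum_add_distrib]
    refine Finset.sum_congr rfl fun i _ => by ring
  have sq : ∀ (p : ℕ) (u v : Fin p → ℝ), ∑ i, (L (1, 0) * u i + L (0, 1) * v i) ^ 2 =
      L (1, 0) ^ 2 * ∑ i, u i ^ 2 + 2 * L (1, 0) * L (0, 1) * ∑ i, u i * v i + L (0, 1) ^ 2 * ∑ i, v i ^ 2 := by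
    intro p u v
    simp_rw [Finset.mul_sum, ← Finset.sum_add_distrib]
    refine Finset.sum_congr rfl fun i _ => by ring
  simp_rw [key]
  rw [char_lin, char_lin, sq, sq, h1, h2, h3]

lemma measurable_rsign : Measurable Real.sign := by
  unfold Real.sign
  exact Measurable.ite measurableSet_Iio measurable_const (Measurable.ite measurableSet_Ioi measurable_const measurable_const)

lemma sheppard (n : ℕ) (a b : Fin n → ℝ) (ha : ∑ i, a i ^ 2 = 1) (hb : ∑ i, b i ^ 2 = 1) :
    |∑ i, a i * b i| ≤ 1 ∧
    ∫ g, Real.sign (∑ i, a i * g i) * Real.sign (∑ i, b i * g i) ∂(stdG n) =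
      2 / Real.pi * Real.arcsin (∑ i, a i * b i) := by
  have hc : |∑ i, a i * b i| ≤ 1 := by
    have := Finset.sum_mul_sq_le_sq_mul_sq Finset.univ a b
    rw [ha, hb, mul_one] at this
    exact sq_le_one_iff_abs_le_one _ |>.1 this
  refine ⟨hc, ?_⟩
  set c := ∑ i, a i * b i with hcdef
  rw [abs_le] at hc
  set θ := Real.arccos c with hθ
  have hcos : Real.cos θ = c := Real.cos_arccos hc.1 hc.2
  have hl := pair_law n 2 a b ![1, 0] ![Real.cos θ, Real.sin θ] (by simp [ha]) (by simp [hb])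
    (by simp [hcos, hcdef])
  have hF : Measurable (fun p : ℝ × ℝ => Real.sign p.1 * Real.sign p.2) :=
    (measurable_rsign.comp measurable_fst).mul (measurable_rsign.comp measurable_snd)
  have e1 : ∫ g, Real.sign (∑ i, a i * g i) * Real.sign (∑ i, b i * g i) ∂(stdG n) =
      ∫ p : ℝ × ℝ, Real.sign p.1 * Real.sign p.2 ∂((stdG n).map (fun g => (∑ i, a i * g i, ∑ i, b i * g i))) := by
    rw [integral_map (by fun_prop) hF.aestronglyMeasurable]
  rw [e1, hl, integral_map (by fun_prop) hF.aestronglyMeasurable]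
  have mp := measurePreserving_finTwoArrow (gaussianReal 0 1)
  have e2 := sheppard2 θ (Real.arccos_nonneg c) (Real.arccos_le_pi c)
  rw [← mp.integral_comp (MeasurableEquiv.measurableEmbedding _)] at e2
  rw [Real.arcsin_eq_pi_div_two_sub_arccos, ← hθ, ← e2]
  simp [MeasurableEquiv.finTwoArrow]

lemma lin_indep (n d : ℕ) (vi : Fin n → ℝ) (y : Fin d → Fin n → ℝ)
    (h : ∀ j, ∑ i, vi i * y j i = 0) :
    IndepFun (fun g : Fin n → ℝ => ∑ i, vi i * g i) (fun g : Fin n → ℝ => fun j => ∑ i, y j i * g i) (stdG n) := by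
  have hG : IsGaussian (stdG n) := by
    have h1 : stdG n = (stdGaussian (EuclideanSpace ℝ (Fin n))).map
        (PiLp.continuousLinearEquiv 2 ℝ (fun _ : Fin n => ℝ)) := by
      rw [← map_pi_eq_stdGaussian, Measure.map_map (by fun_prop) (by fun_prop)]
      exact Measure.map_id.symm
    rw [h1]; infer_instance
  have hL : ∀ a : Fin n → ℝ, MemLp (fun g : Fin n → ℝ => ∑ i, a i * g i) 2 (stdG n) := by
    intro a
    refine memLp_finsetSum _ fun i _ => MemLp.const_mul ?_ _
    exact IsGaussian.memLp_dual (stdG n) (ContinuousLinearMap.proj i) 2 (by norm_num)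
  have hcov : ∀ j, cov[fun g : Fin n → ℝ => ∑ i, vi i * g i, fun g : Fin n → ℝ => ∑ i, y j i * g i; stdG n] = 0 := by
    intro j
    have hv : ∀ a : Fin n → ℝ, Var[fun g : Fin n → ℝ => ∑ i, a i * g i; stdG n] = ∑ i, a i ^ 2 := by
      intro a
      have h1 := variance_sum_pi (μ := fun _ : Fin n => gaussianReal 0 1) (X := fun i x => a i * x)
        (fun i => MemLp.const_mul IsGaussian.memLp_two_id _)
      have h2 : (∑ i, fun g : Fin n → ℝ => a i * g i) = fun g => ∑ i, a i * g i := by ext g; simp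
      rw [h2] at h1
      rw [h1]
      refine Finset.sum_congr rfl fun i _ => ?_
      rw [variance_const_mul]
      rw [show (fun x : ℝ => x) = id from rfl, variance_id_gaussianReal]; simp
    have h1 := variance_fun_add (hL vi) (hL (y j))
    have h2 := hv (fun i => vi i + y j i)
    simp_rw [add_mul, Finset.sum_add_distrib] at h2
    rw [h2, hv, hv] at h1
    have h4 : ∑ i, (vi i + y j i) ^ 2 = ∑ i, vi i ^ 2 + 2 * ∑ i, vi i * y j i + ∑ i, y j i ^ 2 := by
      simp_rw [Finset.mul_sum, ← Finset.sum_add_distrib]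
      refine Finset.sum_congr rfl fun i _ => by ring
    rw [h4, h j] at h1
    linarith
  let F : (Fin n → ℝ) →L[ℝ] (Fin 1 → ℝ) × (Fin d → ℝ) :=
    ContinuousLinearMap.prod (ContinuousLinearMap.pi fun _ => ∑ i, vi i • ContinuousLinearMap.proj i)
      (ContinuousLinearMap.pi fun j => ∑ i, y j i • ContinuousLinearMap.proj i)
  have h2 : HasGaussianLaw (fun g : Fin n → ℝ => ((fun _ : Fin 1 => ∑ i, vi i * g i), fun j => ∑ i, y j i * g i)) (stdG n) := by
    have := (IsGaussian.hasGaussianLaw_id (μ := stdG n)).map_fun F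
    have e : (fun g : Fin n → ℝ => ((fun _ : Fin 1 => ∑ i, vi i * g i), fun j => ∑ i, y j i * g i)) = fun g => F (id g) := by
      funext g
      refine Prod.ext ?_ ?_ <;> ext <;> simp [F]
    rw [e]; exact this
  have h3 := HasGaussianLaw.indepFun_of_covariance_eval (X := fun (_ : Fin 1) (g : Fin n → ℝ) => ∑ i, vi i * g i)
    (Y := fun j (g : Fin n → ℝ) => ∑ i, y j i * g i) h2 (fun _ j => hcov j)
  have hφ : Measurable (fun x : Fin 1 → ℝ => x 0) := measurable_pi_apply 0
  exact h3.comp hφ measurable_id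

lemma abs_sign_le (x : ℝ) : |Real.sign x| ≤ 1 := by
  rcases Real.sign_apply_eq x with h | h | h <;> rw [h] <;> norm_num

lemma integral_sign_gauss : ∫ x, Real.sign x ∂(gaussianReal 0 1) = 0 := by
  have h := gaussianReal_map_neg (μ := 0) (v := 1)
  rw [neg_zero] at h
  have h2 : ∫ x, Real.sign x ∂(gaussianReal 0 1) = ∫ x, Real.sign (-x) ∂(gaussianReal 0 1) := by
    conv_lhs => rw [← h]
    rw [integral_map (by fun_prop) measurable_rsign.aestronglyMeasurable]
  simp_rw [Real.sign_neg, integral_neg] at h2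
  linarith

lemma gauss_small (a : ℝ) (ha : 0 ≤ a) : (gaussianReal 0 1).real {x | |x| ≤ a} ≤ a := by
  have hs : {x : ℝ | |x| ≤ a} = Set.Icc (-a) a := by ext x; simp [abs_le]
  have hsq : 2 ≤ Real.sqrt (2 * Real.pi) := by
    apply Real.le_sqrt_of_sq_le
    nlinarith [Real.pi_gt_three]
  rw [hs, Measure.real, gaussianReal_apply_eq_integral 0 one_ne_zero, ENNReal.toReal_ofReal
    (integral_nonneg fun x => gaussianPDFReal_nonneg _ _ _)]
  have h1 : ∫ x in Set.Icc (-a) a, gaussianPDFReal 0 1 x ≤ ∫ x in Set.Icc (-a) a, (1 / 2 : ℝ) := by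
    refine setIntegral_mono (integrable_gaussianPDFReal 0 1).integrableOn (by simp) fun x => ?_
    simp only [gaussianPDFReal, NNReal.coe_one, mul_one, sub_zero]
    have h2 : (Real.sqrt (2 * Real.pi))⁻¹ ≤ 1 / 2 := by
      rw [one_div]; exact inv_anti₀ (by norm_num) hsq
    have h3 : Real.exp (-x ^ 2 / 2) ≤ 1 := Real.exp_le_one_iff.2 (by nlinarith [sq_nonneg x])
    have h4 := Real.exp_pos (-x ^ 2 / 2)
    have h5 : 0 < (Real.sqrt (2 * Real.pi))⁻¹ := by positivity
    nlinarith
  refine h1.trans (le_of_eq ?_)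
  simp
  rw [max_eq_left (by linarith)]
  ring

lemma bdd_integrable {Ω : Type*} [MeasurableSpace Ω] (μ : Measure Ω) [IsFiniteMeasure μ] (f : Ω → ℝ) (hf : Measurable f)
    (M : ℝ) (h : ∀ x, |f x| ≤ M) : Integrable f μ :=
  Integrable.of_bound hf.aestronglyMeasurable M (Filter.Eventually.of_forall h)

lemma prob_core (n d : ℕ) (w : Fin d → ℝ) (hw : ∀ j, 0 ≤ w j) (vi : Fin n → ℝ) (y : Fin d → Fin n → ℝ)
    (hvi : ∑ i, vi i ^ 2 = 1) (hy : ∀ j, ∑ i, y j i ^ 2 = 1) (horth : ∀ j, ∑ i, vi i * y j i = 0)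
    (ε δ Q : ℝ) (hε : 0 < ε) (hδ : 0 ≤ δ) (hW : 0 < ∑ j, w j)
    (hQ : Q ≤ ∑ j, ∑ k, w j * w k * Real.arcsin (∑ i, y j i * y k i))
    (Δ : (Fin n → ℝ) → ℝ) (hΔm : Measurable Δ) (hΔb : ∀ g, |Δ g| ≤ ∑ j, w j) (hΔ0 : ∀ g, 0 ≤ Δ g)
    (hΔ : ∀ g, |∑ i, vi i * g i| < ε →
      -(if 0 ≤ ∑ i, vi i * g i then (1 : ℝ) else -1) * (∑ j, w j * Real.sign (∑ i, y j i * g i))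
        - 2 * (∑ j, w j * (if |∑ i, y j i * g i| ≤ δ then 1 else 0)) ≤ Δ g) :
    (2 / Real.pi * Q / (∑ j, w j)) / 2 - 2 * ((∑ j, w j) * δ) ≤
      ∫ g, Δ g ∂(ProbabilityTheory.cond (stdG n) {g | |∑ i, vi i * g i| < ε}) := by
  set W := ∑ j, w j with hWdef
  set T : (Fin n → ℝ) → ℝ := fun g => ∑ i, vi i * g i with hT
  set Y : (Fin n → ℝ) → Fin d → ℝ := fun g j => ∑ i, y j i * g i with hY
  have hTm : Measurable T := by fun_prop
  have hYm : Measurable Y := by fun_prop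
  have hind : IndepFun T Y (stdG n) := lin_indep n d vi y horth
  set A : Set (Fin n → ℝ) := {g | |T g| < ε} with hA
  have hAm : MeasurableSet A := measurableSet_lt (by fun_prop) measurable_const
  set Sf : (Fin d → ℝ) → ℝ := fun z => ∑ j, w j * Real.sign (z j) with hSf
  have hSm : Measurable Sf := by
    refine Finset.measurable_sum _ fun j _ => Measurable.const_mul (measurable_rsign.comp (measurable_pi_apply j)) _
  have hSb : ∀ z, |Sf z| ≤ W := by
    intro z
    refine (Finset.abs_sum_le_sum_abs _ _).trans (Finset.sum_le_sum fun j _ => ?_)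
    rw [abs_mul, abs_of_nonneg (hw j)]
    exact mul_le_of_le_one_right (hw j) (abs_sign_le _)
  set Df : (Fin d → ℝ) → ℝ := fun z => ∑ j, w j * (if |z j| ≤ δ then 1 else 0) with hDf
  have hDm : Measurable Df := by
    refine Finset.measurable_sum _ fun j _ => Measurable.const_mul (Measurable.ite ?_ measurable_const measurable_const) _
    exact measurableSet_le (by fun_prop) measurable_const
  have hDb : ∀ z, |Df z| ≤ W := by
    intro z
    refine (Finset.abs_sum_le_sum_abs _ _).trans (Finset.sum_le_sum fun j _ => ?_)
    rw [abs_mul, abs_of_nonneg (hw j)]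
    refine mul_le_of_le_one_right (hw j) ?_
    split_ifs <;> simp
  have hD0 : ∀ z, 0 ≤ Df z := by
    intro z
    refine Finset.sum_nonneg fun j _ => mul_nonneg (hw j) ?_
    split_ifs <;> simp
  have hSi : Integrable (fun g => Sf (Y g)) (stdG n) := bdd_integrable _ _ (hSm.comp hYm) W fun g => hSb _
  have hSai : Integrable (fun g => |Sf (Y g)|) (stdG n) := hSi.abs
  have hDi : Integrable (fun g => Df (Y g)) (stdG n) := bdd_integrable _ _ (hDm.comp hYm) W fun g => hDb _
  -- expectation of S
  have hsgn : ∀ j, Integrable (fun g => Real.sign (Y g j)) (stdG n) := fun j =>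
    bdd_integrable _ _ (measurable_rsign.comp ((measurable_pi_apply j).comp hYm)) 1 fun g => abs_sign_le _
  have hm : ∀ j, Measurable (fun g : Fin n → ℝ => ∑ i, y j i * g i) := fun j => by fun_prop
  have hES : ∫ g, Sf (Y g) ∂(stdG n) = 0 := by
    simp only [hSf]
    rw [integral_finsetSum _ fun j _ => (hsgn j).const_mul _]
    refine Finset.sum_eq_zero fun j _ => ?_
    rw [integral_const_mul]
    have h1 := integral_sign_gauss
    rw [← lin_law n (y j) (hy j), integral_map (hm j).aemeasurable measurable_rsign.aestronglyMeasurable] at h1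
    rw [h1, mul_zero]
  have hED : ∫ g, Df (Y g) ∂(stdG n) ≤ W * δ := by
    simp only [hDf]
    rw [integral_finsetSum, hWdef, Finset.sum_mul]
    · refine Finset.sum_le_sum fun j _ => ?_
      rw [integral_const_mul]
      refine mul_le_mul_of_nonneg_left ?_ (hw j)
      have h1 := gauss_small δ hδ
      have hms : MeasurableSet {a : ℝ | |a| ≤ δ} := measurableSet_le (by fun_prop) measurable_const
      rw [← lin_law n (y j) (hy j), map_measureReal_apply (hm j) hms] at h1
      refine le_trans (le_of_eq ?_) h1
      rw [← integral_indicator_one (hm j hms)]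
      refine integral_congr_ae (Filter.Eventually.of_forall fun g => ?_)
      simp [Set.indicator_apply, hY]
    · intro j _
      refine Integrable.const_mul (bdd_integrable _ _ (Measurable.ite ?_ measurable_const measurable_const) 1 ?_) _
      · exact measurableSet_le (by fun_prop) measurable_const
      · intro g; split_ifs <;> simp
  have hES2 : ∫ g, Sf (Y g) ^ 2 ∂(stdG n) = 2 / Real.pi * ∑ j, ∑ k, w j * w k * Real.arcsin (∑ i, y j i * y k i) := by
    have e : ∀ g, Sf (Y g) ^ 2 = ∑ j, ∑ k, w j * w k * (Real.sign (Y g j) * Real.sign (Y g k)) := by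
      intro g
      simp only [hSf]
      rw [sq, Finset.sum_mul_sum]
      refine Finset.sum_congr rfl fun j _ => Finset.sum_congr rfl fun k _ => by ring
    have hi : ∀ j k, Integrable (fun g => w j * w k * (Real.sign (Y g j) * Real.sign (Y g k))) (stdG n) := by
      intro j k
      refine Integrable.const_mul (bdd_integrable _ _ ((measurable_rsign.comp ((measurable_pi_apply j).comp hYm)).mul
        (measurable_rsign.comp ((measurable_pi_apply k).comp hYm))) 1 fun g => ?_) _
      simp only [Pi.mul_apply, Function.comp_apply]
      rw [abs_mul]
      exact mul_le_one₀ (abs_sign_le _) (abs_nonneg _) (abs_sign_le _)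
    simp_rw [e]
    rw [integral_finsetSum _ fun j _ => integrable_finsetSum _ fun k _ => hi j k, Finset.mul_sum]
    refine Finset.sum_congr rfl fun j _ => ?_
    rw [integral_finsetSum _ fun k _ => hi j k, Finset.mul_sum]
    refine Finset.sum_congr rfl fun k _ => ?_
    rw [integral_const_mul, (sheppard n (y j) (y k) (hy j) (hy k)).2]
    ring
  have hEabs : 2 / Real.pi * Q / W ≤ ∫ g, |Sf (Y g)| ∂(stdG n) := by
    rw [div_le_iff₀ hW, mul_comm _ W, ← integral_const_mul]
    have h1 : 2 / Real.pi * Q ≤ ∫ g, Sf (Y g) ^ 2 ∂(stdG n) := by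
      rw [hES2]
      exact mul_le_mul_of_nonneg_left hQ (by positivity)
    refine h1.trans (integral_mono ?_ (hSai.const_mul _) fun g => ?_)
    · refine bdd_integrable _ _ ((hSm.comp hYm).pow_const 2) (W ^ 2) fun g => ?_
      rw [abs_pow]
      exact pow_le_pow_left₀ (abs_nonneg _) (hSb _) 2
    · simp only
      rw [← sq_abs, sq]
      exact mul_le_mul_of_nonneg_right (hSb _) (abs_nonneg _)
  -- independence
  have hprod : ∀ (f : ℝ → ℝ) (H : (Fin d → ℝ) → ℝ), Measurable f → Measurable H →
      ∫ g, f (T g) * H (Y g) ∂(stdG n) = (∫ g, f (T g) ∂(stdG n)) * ∫ g, H (Y g) ∂(stdG n) := by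
    intro f H hf hH
    exact hind.integral_fun_comp_mul_comp hTm.aemeasurable hYm.aemeasurable hf.aestronglyMeasurable hH.aestronglyMeasurable
  set f1 : ℝ → ℝ := fun t => if |t| < ε then 1 else 0 with hf1
  have hf1m : Measurable f1 := Measurable.ite (measurableSet_lt (by fun_prop) measurable_const) measurable_const measurable_const
  set f2 : ℝ → ℝ := fun t => f1 t * (if 0 ≤ t then 1 else -1) with hf2
  have hf2m : Measurable f2 := hf1m.mul (Measurable.ite measurableSet_Ici measurable_const measurable_const)
  have hf1b : ∀ t, |f1 t| ≤ 1 := by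
    intro t; simp only [hf1]; split_ifs <;> simp
  have hf2b : ∀ t, |f2 t| ≤ 1 := by
    intro t; simp only [hf2, hf1]; split_ifs <;> simp
  have hPA : ∫ g, f1 (T g) ∂(stdG n) = (stdG n).real A := by
    rw [← integral_indicator_one hAm]
    refine integral_congr_ae (Filter.Eventually.of_forall fun g => ?_)
    simp [Set.indicator_apply, hf1, hA]
  have hPApos : 0 < (stdG n).real A := by
    have h1 : (stdG n) A = gaussianReal 0 1 {t | |t| < ε} := by
      rw [← lin_law n vi hvi, Measure.map_apply hTm (measurableSet_lt (by fun_prop) measurable_const)]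
      rfl
    have h2 : gaussianReal 0 1 {t | |t| < ε} ≠ 0 := by
      intro h0
      have h3 := gaussianReal_absolutelyContinuous' 0 (one_ne_zero (α := NNReal)) h0
      have h4 : {t : ℝ | |t| < ε} = Set.Ioo (-ε) ε := by ext t; simp [abs_lt]
      rw [h4] at h3
      simp at h3
      linarith
    rw [Measure.real, ENNReal.toReal_pos_iff]
    exact ⟨by rw [h1]; exact pos_iff_ne_zero.2 h2, measure_lt_top _ _⟩
  have hcond : ∫ g, Δ g ∂(ProbabilityTheory.cond (stdG n) A) = ((stdG n).real A)⁻¹ * ∫ g, f1 (T g) * Δ g ∂(stdG n) := by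
    rw [ProbabilityTheory.cond, integral_smul_measure, ENNReal.toReal_inv, smul_eq_mul, ← integral_indicator hAm]
    congr 1
    refine integral_congr_ae (Filter.Eventually.of_forall fun g => ?_)
    simp only [Set.indicator_apply, hf1, hA, Set.mem_ofPred_eq, ite_mul, one_mul, zero_mul]
  have hbm : ∀ (f : ℝ → ℝ) (H : (Fin n → ℝ) → ℝ), Measurable f → (∀ t, |f t| ≤ 1) → Measurable H → (∀ g, |H g| ≤ W) →
      Integrable (fun g => f (T g) * H g) (stdG n) := by
    intro f H hf hfb hH hHb
    refine bdd_integrable _ _ ((hf.comp hTm).mul hH) (1 * W) fun g => ?_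
    rw [abs_mul]
    exact mul_le_mul (hfb _) (hHb _) (abs_nonneg _) zero_le_one
  have i1 := hbm f1 (fun g => |Sf (Y g)|) hf1m hf1b (hSm.comp hYm).abs (fun g => by rw [abs_abs]; exact hSb _)
  have i2 := hbm f2 (fun g => Sf (Y g)) hf2m hf2b (hSm.comp hYm) (fun g => hSb _)
  have i3 := hbm f1 (fun g => Df (Y g)) hf1m hf1b (hDm.comp hYm) (fun g => hDb _)
  have i4 := hbm f1 Δ hf1m hf1b hΔm hΔb
  have hmain : ∫ g, (1 / 2 * (f1 (T g) * |Sf (Y g)|) - 1 / 2 * (f2 (T g) * Sf (Y g)) - 2 * (f1 (T g) * Df (Y g))) ∂(stdG n)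
      ≤ ∫ g, f1 (T g) * Δ g ∂(stdG n) := by
    refine integral_mono (((i1.const_mul _).sub (i2.const_mul _)).sub (i3.const_mul _)) i4 fun g => ?_
    simp only [hf2]
    by_cases hg : |T g| < ε
    · have h1 := hΔ g hg
      have h2 := hΔ0 g
      have h3 := hD0 (Y g)
      have e1 : f1 (T g) = 1 := by simp [hf1, hg]
      rw [e1]
      change -(if 0 ≤ T g then (1 : ℝ) else -1) * Sf (Y g) - 2 * Df (Y g) ≤ Δ g at h1
      split_ifs at h1 ⊢
      · rcases abs_cases (Sf (Y g)) with h | h <;> linarith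
      · rcases abs_cases (Sf (Y g)) with h | h <;> linarith
    · have e1 : f1 (T g) = 0 := by simp [hf1, hg]
      rw [e1]; simp
  have j12 : Integrable (fun g => 1 / 2 * (f1 (T g) * |Sf (Y g)|) - 1 / 2 * (f2 (T g) * Sf (Y g))) (stdG n) :=
    (i1.const_mul _).sub (i2.const_mul _)
  rw [integral_sub j12 (i3.const_mul 2), integral_sub (i1.const_mul (1 / 2)) (i2.const_mul (1 / 2)),
    integral_const_mul, integral_const_mul, integral_const_mul, hprod f1 (fun z => |Sf z|) hf1m hSm.abs,
    hprod f2 Sf hf2m hSm, hprod f1 Df hf1m hDm, hES, hPA] at hmain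
  rw [hcond, inv_mul_eq_div, le_div_iff₀ hPApos]
  refine le_trans ?_ hmain
  nlinarith

lemma geom_core (n d : ℕ) (b : Fin d → ℝ) (hb : ∀ j, b j = 1 ∨ b j = -1)
    (vi : Fin n → ℝ) (v : Fin d → Fin n → ℝ) (hvi : ∑ i, vi i ^ 2 = 1) (hv : ∀ j, ∑ i, v j i ^ 2 = 1)
    (hρ : ∀ j, 9 / 100 ≤ b j * ∑ i, vi i * v j i ∧ b j * ∑ i, vi i * v j i ≤ 991 / 1000)
    (htri : ∀ j k, j ≠ k → ∀ a aj ak : ℝ,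
          (a = 1 ∨ a = -1) → (aj = 1 ∨ aj = -1) → (ak = 1 ∨ ak = -1) →
          (∑ i, (a * vi i - aj * v j i) ^ 2) + ∑ i, (aj * v j i - ak * v k i) ^ 2 ≥
            ∑ i, (a * vi i - ak * v k i) ^ 2) :
    ∃ (ρ σ : Fin d → ℝ) (y : Fin d → Fin n → ℝ), (∀ j, 0 ≤ ρ j ∧ ρ j ≤ 1) ∧ (∀ j, 13 / 100 ≤ σ j) ∧
      (∀ j, ∑ i, y j i ^ 2 = 1) ∧ (∀ j, ∑ i, vi i * y j i = 0) ∧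
      (∀ j k, -(21 / 25) ≤ ∑ i, y j i * y k i) ∧
      (∀ j (g : Fin n → ℝ), b j * ∑ i, v j i * g i = ρ j * (∑ i, vi i * g i) + σ j * ∑ i, y j i * g i) := by
  set ρ : Fin d → ℝ := fun j => b j * ∑ i, vi i * v j i with hρd
  have hb2 : ∀ j, b j ^ 2 = 1 := fun j => by rcases hb j with h | h <;> rw [h] <;> norm_num
  have hs : ∀ j, 0 < 1 - ρ j ^ 2 := fun j => by
    have := hρ j
    change 9 / 100 ≤ ρ j ∧ ρ j ≤ 991 / 1000 at this
    nlinarith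
  set σ : Fin d → ℝ := fun j => Real.sqrt (1 - ρ j ^ 2) with hσd
  have hσ2 : ∀ j, σ j ^ 2 = 1 - ρ j ^ 2 := fun j => Real.sq_sqrt (hs j).le
  have hσ : ∀ j, 13 / 100 ≤ σ j := fun j => by
    apply Real.le_sqrt_of_sq_le
    have := hρ j
    change 9 / 100 ≤ ρ j ∧ ρ j ≤ 991 / 1000 at this
    nlinarith
  have hσ0 : ∀ j, 0 < σ j := fun j => by linarith [hσ j]
  set y : Fin d → Fin n → ℝ := fun j i => (b j * v j i - ρ j * vi i) / σ j with hyd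
  have hprod : ∀ j k, σ j * σ k * ∑ i, y j i * y k i = b j * b k * (∑ i, v j i * v k i) - ρ j * ρ k := by
    intro j k
    have e : ∀ i, σ j * σ k * (y j i * y k i) = b j * b k * (v j i * v k i) - ρ k * b j * (vi i * v j i)
        - ρ j * b k * (vi i * v k i) + ρ j * ρ k * vi i ^ 2 := by
      intro i
      have h1 : σ j * y j i = b j * v j i - ρ j * vi i := by simp only [hyd]; field_simp [(hσ0 j).ne']
      have h2 : σ k * y k i = b k * v k i - ρ k * vi i := by simp only [hyd]; field_simp [(hσ0 k).ne']
      calc σ j * σ k * (y j i * y k i) = (σ j * y j i) * (σ k * y k i) := by ring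
        _ = _ := by rw [h1, h2]; ring
    rw [Finset.mul_sum, Finset.sum_congr rfl fun i _ => e i]
    rw [Finset.sum_add_distrib, Finset.sum_sub_distrib, Finset.sum_sub_distrib, ← Finset.mul_sum, ← Finset.mul_sum,
      ← Finset.mul_sum, ← Finset.mul_sum, hvi]
    have h1 : ρ j = b j * ∑ i, vi i * v j i := rfl
    have h2 : ρ k = b k * ∑ i, vi i * v k i := rfl
    linear_combination (ρ k) * h1 + (ρ j) * h2
  have hyy : ∀ j, ∑ i, y j i ^ 2 = 1 := by
    intro j
    have h1 := hprod j j
    simp_rw [← sq] at h1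
    rw [hv, hb2, hσ2] at h1
    have h2 : (1 - ρ j ^ 2) * (∑ i, y j i ^ 2) = (1 - ρ j ^ 2) * 1 := by linarith
    exact mul_left_cancel₀ (hs j).ne' h2
  refine ⟨ρ, σ, y, fun j => ⟨by linarith [(hρ j).1], by linarith [(hρ j).2]⟩, hσ, hyy, ?_, ?_, ?_⟩
  · intro j
    have e : ∀ i, σ j * (vi i * y j i) = b j * (vi i * v j i) - ρ j * vi i ^ 2 := by
      intro i
      have h1 : σ j * y j i = b j * v j i - ρ j * vi i := by simp only [hyd]; field_simp [(hσ0 j).ne']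
      linear_combination vi i * h1
    have h3 : σ j * ∑ i, vi i * y j i = 0 := by
      rw [Finset.mul_sum, Finset.sum_congr rfl fun i _ => e i, Finset.sum_sub_distrib, ← Finset.mul_sum,
        ← Finset.mul_sum, hvi]
      simp [hρd]
    exact (mul_eq_zero.1 h3).resolve_left (hσ0 j).ne'
  · intro j k
    by_cases hjk : j = k
    · subst hjk
      simp_rw [← sq]
      rw [hyy]; norm_num
    have hk' : (-b k) = 1 ∨ (-b k) = -1 := by
      rcases hb k with h | h <;> rw [h] <;> norm_num
    have ht := htri j k hjk 1 (b j) (-b k) (Or.inl rfl) (hb j) hk'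
    have x1 : ∀ (a c : ℝ) (p q : Fin n → ℝ), ∑ i, (a * p i - c * q i) ^ 2 =
        a ^ 2 * (∑ i, p i ^ 2) - 2 * a * c * (∑ i, p i * q i) + c ^ 2 * ∑ i, q i ^ 2 := by
      intro a c p q
      rw [Finset.mul_sum, Finset.mul_sum, Finset.mul_sum, ← Finset.sum_sub_distrib, ← Finset.sum_add_distrib]
      exact Finset.sum_congr rfl fun i _ => by ring
    rw [x1, x1, x1, hvi, hv, hv, neg_sq, hb2, hb2] at ht
    have h1 : ρ j = b j * ∑ i, vi i * v j i := rfl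
    have h2 : ρ k = b k * ∑ i, vi i * v k i := rfl
    have hq : 0 ≤ 1 - ρ j - ρ k + b j * b k * (∑ i, v j i * v k i) := by
      rw [h1, h2]; linarith
    have hp := hprod j k
    have hj := hρ j
    have hk := hρ k
    change 9 / 100 ≤ ρ j ∧ ρ j ≤ 991 / 1000 at hj
    change 9 / 100 ≤ ρ k ∧ ρ k ≤ 991 / 1000 at hk
    have hlow : -((1 - ρ j) * (1 - ρ k)) ≤ σ j * σ k * ∑ i, y j i * y k i := by
      rw [hp]; linarith
    have hsq : ∀ r : ℝ, 9 / 100 ≤ r → r ≤ 991 / 1000 → (1 - r) ^ 2 ≤ 21 / 25 * (1 - r ^ 2) := by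
      intro r h1 h2
      nlinarith
    have hab : (1 - ρ j) * (1 - ρ k) ≤ 21 / 25 * (σ j * σ k) := by
      refine abs_le_of_sq_le_sq' ?_ (by have := mul_pos (hσ0 j) (hσ0 k); linarith) |>.2
      have := mul_le_mul (hsq _ hj.1 hj.2) (hsq _ hk.1 hk.2) (sq_nonneg _) (by have := hs j; linarith)
      rw [← hσ2, ← hσ2] at this
      linarith
    have hpos := mul_pos (hσ0 j) (hσ0 k)
    have h5 : σ j * σ k * (-(21 / 25)) ≤ σ j * σ k * ∑ i, y j i * y k i := by linarith
    exact le_of_mul_le_mul_left h5 hpos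
  · intro j g
    rw [Finset.mul_sum, Finset.mul_sum, Finset.mul_sum, ← Finset.sum_add_distrib]
    refine Finset.sum_congr rfl fun i _ => ?_
    have h1 : σ j * y j i = b j * v j i - ρ j * vi i := by simp only [hyd]; field_simp [(hσ0 j).ne']
    linear_combination (- g i) * h1

lemma term_bound (w x b V T Y ρ σ ε δ : ℝ) (hw : 0 ≤ w) (hx : x = 1 ∨ x = -1) (hε : 0 < ε)
    (hT : |T| < ε) (hρ0 : 0 ≤ ρ) (hρ1 : ρ ≤ 1) (hσ : 13 / 100 ≤ σ) (hδ : δ = 2 * ε / (13 / 100))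
    (hV : b * V = ρ * T + σ * Y) :
    -x * (w * Real.sign Y) - 2 * (w * (if |Y| ≤ δ then 1 else 0)) ≤
      2 * (if b * x * V ≤ -ε then w else 0) - w := by
  have hs := abs_le.1 (abs_sign_le Y)
  have hT' := abs_lt.1 hT
  have hρT : |ρ * T| < ε := by
    rw [abs_mul, abs_of_nonneg hρ0]
    nlinarith [abs_nonneg T]
  have hρT' := abs_lt.1 hρT
  have hI : 0 ≤ (if b * x * V ≤ -ε then w else 0) := by split_ifs <;> linarith
  by_cases hY : |Y| ≤ δ
  · rw [if_pos hY]
    rcases hx with h | h <;> rw [h] at hI ⊢ <;> nlinarith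
  · rw [if_neg hY]
    have hYd : 2 * ε < σ * |Y| := by
      push Not at hY
      rw [hδ, div_lt_iff₀ (by norm_num)] at hY
      nlinarith [abs_nonneg Y]
    have e : b * x * V = x * (ρ * T + σ * Y) := by rw [← hV]; ring
    rcases lt_trichotomy Y 0 with h0 | h0 | h0
    · rw [abs_of_neg h0] at hYd
      rw [Real.sign_of_neg h0]
      rcases hx with h | h
      · rw [if_pos (by rw [e, h]; linarith), h]; linarith
      · rw [h] at hI ⊢; linarith
    · exfalso; rw [h0] at hYd; simp at hYd; linarith
    · rw [abs_of_pos h0] at hYd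
      rw [Real.sign_of_pos h0]
      rcases hx with h | h
      · rw [h] at hI ⊢; linarith
      · rw [if_pos (by rw [e, h]; linarith), h]; linarith

/-- Expected local gain: there are absolute constants `C, c > 0` such that for every
`d ≥ 2`, `ε = 1/(C d √(log d))`, and a vertex `i` with `d` neighbors, signs `b_{ij}`,
nonnegative weights `w_{ij}` (total `W_i`), and unit SDP vectors satisfying
`b_{ij}⟨v_i,v_j⟩ ∈ [ρ*-0.01, ρ*+0.01]` and the ℓ₂² triangle inequalities, the expected
local gain `Δ_i = max(0, 2 Σ_{j∈B_i} w_{ij} − W_i)` conditioned on `|⟨g,v_i⟩| < ε`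
is at least `c·W_i/(d√(log d))`. -/
theorem expected_local_gain :
    ∃ C c : ℝ, C > 0 ∧ c > 0 ∧ ∀ d : ℕ, 2 ≤ d → ∀ ε : ℝ,
      ε = 1 / (C * d * Real.sqrt (Real.log d)) →
      ∀ ρstar : ℝ, ρstar ∈ Set.Ioc (-1 : ℝ) 1 →
        (∀ ρ ∈ Set.Ioc (-1 : ℝ) 1, gwRatio ρstar ≤ gwRatio ρ) →
      ∀ n : ℕ, ∀ b w : Fin d → ℝ,
        (∀ j, b j = 1 ∨ b j = -1) → (∀ j, 0 ≤ w j) →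
      ∀ (vi : Fin n → ℝ) (v : Fin d → Fin n → ℝ),
        (∑ i, vi i ^ 2 = 1) → (∀ j, ∑ i, v j i ^ 2 = 1) →
        (∀ j, b j * ∑ i, vi i * v j i ∈ Set.Icc (ρstar - 0.01) (ρstar + 0.01)) →
        (∀ j k, j ≠ k → ∀ a aj ak : ℝ,
          (a = 1 ∨ a = -1) → (aj = 1 ∨ aj = -1) → (ak = 1 ∨ ak = -1) →
          (∑ i, (a * vi i - aj * v j i) ^ 2) + ∑ i, (aj * v j i - ak * v k i) ^ 2 ≥
            ∑ i, (a * vi i - ak * v k i) ^ 2) →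
        (∫ g : Fin n → ℝ,
            max 0 (2 * (∑ j, if b j * (if 0 ≤ ∑ i, vi i * g i then (1 : ℝ) else -1) *
                    (∑ i, v j i * g i) ≤ -ε then w j else 0) - ∑ j, w j)
          ∂(ProbabilityTheory.cond (Measure.pi fun _ : Fin n => gaussianReal 0 1)
              {g | |∑ i, vi i * g i| < ε})) ≥
          c * (∑ j, w j) / (d * Real.sqrt (Real.log d)) := by
  refine ⟨20000, 1 / 1000, by norm_num, by norm_num, ?_⟩
  intro d hd ε hε ρstar hρmem hρmin n b w hb hw vi v hvi hv hcorr htri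
  have hlog : 0 < Real.log d := Real.log_pos (by exact_mod_cast hd)
  have hd0 : (0 : ℝ) < d := by exact_mod_cast (by omega : 0 < d)
  have hsq : 0 < Real.sqrt (Real.log d) := Real.sqrt_pos.2 hlog
  set D0 : ℝ := d * Real.sqrt (Real.log d) with hD0
  have hD0pos : 0 < D0 := mul_pos hd0 hsq
  have hεD : ε = 1 / (20000 * D0) := by rw [hε, hD0, mul_assoc]
  have hεpos : 0 < ε := by rw [hεD]; positivity
  have hW0 : 0 ≤ ∑ j, w j := Finset.sum_nonneg fun j _ => hw j
  rcases hW0.eq_or_lt with hW | hW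
  · rw [← hW, mul_zero, zero_div]
    exact integral_nonneg fun g => le_max_left _ _
  obtain ⟨hg1, hg2⟩ := gw_bounds ρstar hρmem hρmin
  obtain ⟨ρ, σ, y, hρ, hσ, hy, horth, hneg, hV⟩ := geom_core n d b hb vi v hvi hv
    (fun j => by
      have := hcorr j
      rw [Set.mem_Icc] at this
      constructor <;> [have h := this.1; have h := this.2] <;> norm_num at h ⊢ <;> linarith) htri
  have hQ := arcsin_lower d hd w hw y (fun j k => ∑ i, y j i * y k i) (fun j k => rfl)
    (fun j k => (sheppard n (y j) (y k) (hy j) (hy k)).1) (fun j => by simpa [sq] using hy j) hneg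
  set W := ∑ j, w j with hWd
  have hmeas : Measurable fun g : Fin n → ℝ => max 0 (2 * (∑ j, if b j * (if 0 ≤ ∑ i, vi i * g i then (1 : ℝ) else -1) *
                    (∑ i, v j i * g i) ≤ -ε then w j else 0) - W) := by
    have hx : Measurable fun g : Fin n → ℝ => (if 0 ≤ ∑ i, vi i * g i then (1 : ℝ) else -1) :=
      Measurable.ite (measurableSet_le measurable_const (by fun_prop)) measurable_const measurable_const
    refine measurable_const.max (((Finset.measurable_sum _ fun j _ => ?_).const_mul 2).sub_const _)
    refine Measurable.ite (measurableSet_le ?_ measurable_const) measurable_const measurable_const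
    exact (hx.const_mul _).mul (by fun_prop)
  have key := prob_core n d w hw vi y hvi hy horth ε (2 * ε / (13 / 100)) (W ^ 2 / (96 * D0)) hεpos (by positivity) hW hQ
    _ hmeas ?_ (fun g => le_max_left _ _) ?_
  · refine ge_iff_le.2 (le_trans ?_ key)
    have hpi : 3 / 5 ≤ 2 / Real.pi := by
      rw [le_div_iff₀ Real.pi_pos]; linarith [Real.pi_lt_d2]
    rw [← hWd]
    have hWD : 0 < W / D0 := div_pos hW hD0pos
    have e1 : 2 / Real.pi * (W ^ 2 / (96 * D0)) / W / 2 = 2 / Real.pi * (W / D0) / 192 := by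
      field_simp; norm_num
    have e2 : 2 * (W * (2 * ε / (13 / 100))) = (W / D0) * (4 * 100 / 13 / 20000) := by
      rw [hεD]; field_simp; norm_num
    have e3 : 1 / 1000 * W / D0 = (W / D0) * (1 / 1000) := by ring
    rw [e1, e2, e3]
    nlinarith
  · intro g
    rw [abs_of_nonneg (le_max_left _ _)]
    refine max_le hW0 ?_
    have : (∑ j, if b j * (if 0 ≤ ∑ i, vi i * g i then (1 : ℝ) else -1) *
                    (∑ i, v j i * g i) ≤ -ε then w j else 0) ≤ W :=
      Finset.sum_le_sum fun j _ => by have := hw j; split_ifs <;> linarith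
    linarith
  · intro g hg
    refine le_trans ?_ (le_max_right _ _)
    have hx : (if 0 ≤ ∑ i, vi i * g i then (1 : ℝ) else -1) = 1 ∨ (if 0 ≤ ∑ i, vi i * g i then (1 : ℝ) else -1) = -1 := by
      split_ifs <;> simp
    generalize (if 0 ≤ ∑ i, vi i * g i then (1 : ℝ) else -1) = x at hx
    rw [hWd, Finset.mul_sum, Finset.mul_sum, Finset.mul_sum, ← Finset.sum_sub_distrib, ← Finset.sum_sub_distrib]
    exact Finset.sum_le_sum fun j _ => term_bound (w j) x (b j) _ _ _ (ρ j) (σ j) ε _ (hw j) hx hεpos hg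
      (hρ j).1 (hρ j).2 (hσ j) rfl (hV j g)
end

section
/- There exist absolute constants C, c > 0 such that the following holds for every integer d ≥ 2 and ε = 1/(C·d·√(log d)). Let G = (V, E) be a graph on n vertices with maximum degree at most d, with signs b_{ij} ∈ {−1,+1} and nonnegative weights w_{ij} ≥ 0 on the edges, and total weight W = Σ_{{i,j}∈E} w_{ij}. Let v_1, …, v_n be unit vectors in ℝⁿ such that b_{ij}⟨v_i, v_j⟩ ∈ [ρ*−0.01, ρ*+0.01] for every edge {i,j}, and such that ‖a_i v_i − a_j v_j‖² + ‖a_j v_j − a_k v_k‖² ≥ ‖a_i v_i − a_k v_k‖² for every triple of vertices {i,j,k} and all signs a_i, a_j, a_k ∈ {−1,+1}. Let g ~ N(0, I_n), set x_i = sgn(⟨g, v_i⟩), let S = {i ∈ V : |⟨g, v_i⟩| < ε}, for i ∈ S let B_i = {j ∈ N(i) : b_{ij} x_i ⟨g, v_j⟩ ≤ −ε}, let W_i = Σ_{j∈N(i)} w_{ij}, and let Δ_i = max(0, 2·Σ_{j∈B_i} w_{ij} − W_i). Then E_g[Σ_{i∈S} Δ_i] ≥ c · W/(d² · log d). -/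
open MeasureTheory ProbabilityTheory

noncomputable def sg (x : ℝ) : ℝ := if 0 ≤ x then 1 else -1

lemma sg_abs (x : ℝ) : |sg x| = 1 := by
  unfold sg; split_ifs <;> simp

lemma measurable_sg : Measurable sg := by
  unfold sg
  exact Measurable.ite measurableSet_Ici measurable_const measurable_const

noncomputable def dD (a : ℝ) : ℝ := ∫ x in Set.Ioi (0:ℝ), Real.sin (a * x) * Real.exp (-(1/2) * x ^ 2)

lemma intE : Integrable (fun x : ℝ => Real.exp (-(1/2) * x ^ 2)) :=
  integrable_exp_neg_mul_sq (by norm_num)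

lemma intE4 : Integrable (fun x : ℝ => 4 * Real.exp (-(1/4) * x ^ 2)) :=
  (integrable_exp_neg_mul_sq (by norm_num)).const_mul 4

lemma poly_bound (x : ℝ) : (x ^ 2 + 1) * Real.exp (-(1/2) * x ^ 2) ≤ 4 * Real.exp (-(1/4) * x ^ 2) := by
  have h1 : x ^ 2 + 1 ≤ 4 * Real.exp ((1/4) * x ^ 2) := by
    have := Real.add_one_le_exp ((1/4) * x ^ 2)
    nlinarith
  have h2 : Real.exp (-(1/4) * x ^ 2) = Real.exp ((1/4) * x ^ 2) * Real.exp (-(1/2) * x ^ 2) := by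
    rw [← Real.exp_add]; congr 1; ring
  rw [h2, ← mul_assoc]
  exact mul_le_mul_of_nonneg_right h1 (Real.exp_pos _).le

lemma int_of_bound {f : ℝ → ℝ} (hf : Continuous f)
    (h : ∀ x, |f x| ≤ (x ^ 2 + 1) * Real.exp (-(1/2) * x ^ 2)) : Integrable f := by
  refine intE4.mono' hf.aestronglyMeasurable (Filter.Eventually.of_forall fun x => ?_)
  exact (h x).trans (poly_bound x)

lemma tendsto_of_bound {f : ℝ → ℝ}
    (h : ∀ x, |f x| ≤ (x ^ 2 + 1) * Real.exp (-(1/2) * x ^ 2)) :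
    Filter.Tendsto f Filter.atTop (nhds 0) := by
  have h4 : Filter.Tendsto (fun x : ℝ => 4 * Real.exp (-(1/4) * x ^ 2)) Filter.atTop (nhds 0) := by
    rw [show (0:ℝ) = 4 * 0 by ring]
    refine Filter.Tendsto.const_mul 4 ?_
    refine Real.tendsto_exp_atBot.comp ?_
    refine Filter.Tendsto.const_mul_atTop_of_neg (by norm_num) ?_
    exact Filter.tendsto_pow_atTop (by norm_num)
  exact squeeze_zero_norm (fun x => (h x).trans (poly_bound x)) h4

lemma hasDerivE (x : ℝ) : HasDerivAt (fun x : ℝ => Real.exp (-(1/2) * x ^ 2))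
    (-x * Real.exp (-(1/2) * x ^ 2)) x := by
  have := ((hasDerivAt_pow 2 x).const_mul (-(1/2):ℝ)).exp
  refine this.congr_deriv ?_
  simp; ring

lemma dD_nonneg {a : ℝ} (ha : 0 ≤ a) : 0 ≤ dD a := by
  rcases ha.eq_or_lt with rfl | ha
  · simp [dD]
  have hb : ∀ x : ℝ, |x| ≤ x ^ 2 + 1 := fun x => by
    rw [abs_le]; constructor <;> nlinarith [sq_nonneg (x-1), sq_nonneg (x+1)]
  have i1 : Integrable (fun x => Real.sin (a * x) * Real.exp (-(1/2) * x ^ 2)) := by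
    refine int_of_bound (by fun_prop) fun x => ?_
    rw [abs_mul, Real.abs_exp]
    refine mul_le_mul_of_nonneg_right ?_ (Real.exp_pos _).le
    have := Real.abs_sin_le_one (a * x)
    nlinarith [sq_nonneg x]
  have i2 : Integrable (fun x => x * (1 - Real.cos (a * x)) * Real.exp (-(1/2) * x ^ 2)) := by
    have j1 : Integrable (fun x => 2 * (x * Real.exp (-(1/2) * x ^ 2))) :=
      (integrable_mul_exp_neg_mul_sq (by norm_num)).const_mul 2
    refine j1.mono (by fun_prop) (Filter.Eventually.of_forall fun x => ?_)
    simp only [Real.norm_eq_abs, abs_mul, Real.abs_exp]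
    have : |1 - Real.cos (a * x)| ≤ |2| := by
      rw [abs_le]; norm_num
      constructor <;> linarith [Real.cos_le_one (a*x), Real.neg_one_le_cos (a*x)]
    have := mul_le_mul_of_nonneg_right this (mul_nonneg (abs_nonneg x) (Real.exp_pos (-(1/2) * x ^ 2)).le)
    linarith
  have key := integral_Ioi_of_hasDerivAt_of_tendsto' (a := 0) (m := 0)
    (f := fun x => (1/2) * ((1 - Real.cos (a * x)) * Real.exp (-(1/2) * x ^ 2)))
    (f' := fun x => (a/2) * (Real.sin (a * x) * Real.exp (-(1/2) * x ^ 2))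
      - (1/2) * (x * (1 - Real.cos (a * x)) * Real.exp (-(1/2) * x ^ 2)))
    (fun x _ => by
      have h1 : HasDerivAt (fun x => a * x) a x := by simpa using (hasDerivAt_id x).const_mul a
      have := (((h1.cos.const_sub 1).mul (hasDerivE x)).const_mul (1/2))
      refine this.congr_deriv ?_
      ring)
    ((i1.const_mul _).sub (i2.const_mul _)).integrableOn
    (tendsto_of_bound fun x => by
      rw [abs_mul, abs_mul, Real.abs_exp, ← mul_assoc]
      refine mul_le_mul_of_nonneg_right ?_ (Real.exp_pos _).le
      have : |1 - Real.cos (a * x)| ≤ 2 := by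
        rw [abs_le]
        constructor <;> linarith [Real.cos_le_one (a*x), Real.neg_one_le_cos (a*x)]
      rw [abs_of_pos (by norm_num : (0:ℝ) < 1/2)]
      nlinarith [sq_nonneg x])
  rw [integral_sub (i1.const_mul _).integrableOn (i2.const_mul _).integrableOn,
    integral_const_mul, integral_const_mul] at key
  simp only [mul_zero, Real.cos_zero, sub_self, zero_mul] at key
  have pos : 0 ≤ ∫ x in Set.Ioi (0:ℝ), x * (1 - Real.cos (a * x)) * Real.exp (-(1/2) * x ^ 2) := by
    refine setIntegral_nonneg measurableSet_Ioi fun x hx => ?_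
    have := Real.cos_le_one (a*x)
    exact mul_nonneg (mul_nonneg (le_of_lt hx) (by linarith)) (Real.exp_pos _).le
  have : 0 ≤ a * dD a := by unfold dD; linarith
  exact nonneg_of_mul_nonneg_right this ha

lemma dD_large {a : ℝ} (ha : 16 ≤ a) : 1 / (2 * a) ≤ dD a := by
  have ha0 : 0 < a := by linarith
  have i1 : Integrable (fun x => Real.sin (a * x) * Real.exp (-(1/2) * x ^ 2)) := by
    refine int_of_bound (by fun_prop) fun x => ?_
    rw [abs_mul, Real.abs_exp]
    refine mul_le_mul_of_nonneg_right ?_ (Real.exp_pos _).le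
    have := Real.abs_sin_le_one (a * x)
    nlinarith [sq_nonneg x]
  have b2 : ∀ x : ℝ, |(x ^ 2 - 1) * Real.sin (a * x) * Real.exp (-(1/2) * x ^ 2)| ≤
      (x ^ 2 + 1) * Real.exp (-(1/2) * x ^ 2) := fun x => by
    rw [abs_mul, Real.abs_exp, abs_mul]
    refine mul_le_mul_of_nonneg_right ?_ (Real.exp_pos _).le
    have h1 := Real.abs_sin_le_one (a * x)
    have h2 : |x ^ 2 - 1| ≤ x ^ 2 + 1 := by
      rw [abs_le]; constructor <;> nlinarith [sq_nonneg x]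
    calc _ ≤ (x^2+1) * 1 := mul_le_mul h2 h1 (abs_nonneg _) (by positivity)
      _ = _ := mul_one _
  have i2 : Integrable (fun x => (x ^ 2 - 1) * Real.sin (a * x) * Real.exp (-(1/2) * x ^ 2)) :=
    int_of_bound (by fun_prop) b2
  have key := integral_Ioi_of_hasDerivAt_of_tendsto' (a := 0) (m := 0)
    (f := fun x => (1/2) * (-(Real.cos (a * x) * Real.exp (-(1/2) * x ^ 2))
        - (1/a) * (x * Real.sin (a * x) * Real.exp (-(1/2) * x ^ 2))))
    (f' := fun x => (a/2) * (Real.sin (a * x) * Real.exp (-(1/2) * x ^ 2))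
      + (1/(2*a)) * ((x ^ 2 - 1) * Real.sin (a * x) * Real.exp (-(1/2) * x ^ 2)))
    (fun x _ => by
      have h1 : HasDerivAt (fun x => a * x) a x := by simpa using (hasDerivAt_id x).const_mul a
      have := (((h1.cos.mul (hasDerivE x)).neg.sub
        ((((hasDerivAt_id x).mul h1.sin).mul (hasDerivE x)).const_mul (1/a))).const_mul (1/2))
      refine this.congr_deriv ?_
      simp only [id, Pi.mul_apply]
      field_simp
      ring)
    ((i1.const_mul _).add (i2.const_mul _)).integrableOn
    (tendsto_of_bound fun x => by
      have : (1/2) * (-(Real.cos (a * x) * Real.exp (-(1/2) * x ^ 2))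
        - (1/a) * (x * Real.sin (a * x) * Real.exp (-(1/2) * x ^ 2))) =
        ((1/2) * (-(Real.cos (a * x)) - (1/a) * (x * Real.sin (a * x)))) * Real.exp (-(1/2) * x ^ 2) := by ring
      rw [this, abs_mul, Real.abs_exp]
      refine mul_le_mul_of_nonneg_right ?_ (Real.exp_pos _).le
      have h1 := Real.abs_sin_le_one (a * x)
      have h2 := Real.abs_cos_le_one (a * x)
      have h3 : |(1/a) * (x * Real.sin (a * x))| ≤ |x| := by
        rw [abs_mul, abs_mul, abs_of_pos (by positivity : 0 < 1/a)]
        have : 1 / a ≤ 1 := by rw [div_le_one ha0]; linarith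
        calc _ ≤ 1 * (|x| * 1) := by gcongr
          _ = _ := by ring
      rw [abs_mul, abs_of_pos (by norm_num : (0:ℝ) < 1/2)]
      have h4 := abs_sub (-(Real.cos (a * x))) ((1/a) * (x * Real.sin (a * x)))
      rw [abs_neg] at h4
      nlinarith [sq_nonneg (|x| - 1), sq_abs x])
  rw [integral_add (i1.const_mul _).integrableOn (i2.const_mul _).integrableOn,
    integral_const_mul, integral_const_mul] at key
  simp only [mul_zero, Real.cos_zero, zero_mul] at key
  have bd : |∫ x in Set.Ioi (0:ℝ), (x ^ 2 - 1) * Real.sin (a * x) * Real.exp (-(1/2) * x ^ 2)| ≤ 8 := by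
    calc _ ≤ ∫ x in Set.Ioi (0:ℝ), |(x ^ 2 - 1) * Real.sin (a * x) * Real.exp (-(1/2) * x ^ 2)| :=
          abs_integral_le_integral_abs
      _ ≤ ∫ x in Set.Ioi (0:ℝ), 4 * Real.exp (-(1/4) * x ^ 2) :=
          integral_mono i2.abs.integrableOn intE4.integrableOn fun x => (b2 x).trans (poly_bound x)
      _ = 4 * (Real.sqrt (Real.pi / (1/4)) / 2) := by
          rw [integral_const_mul, integral_gaussian_Ioi]
      _ ≤ 8 := by
          have : Real.sqrt (Real.pi / (1/4)) ≤ 4 := by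
            rw [Real.sqrt_le_left (by norm_num)]
            linarith [Real.pi_le_four]
          linarith
  have e1 : (1/(2*a)) * (∫ x in Set.Ioi (0:ℝ), (x ^ 2 - 1) * Real.sin (a * x) * Real.exp (-(1/2) * x ^ 2)) ≤ 1/4 := by
    have h1 : 1/(2*a) ≤ 1/32 := by
      apply one_div_le_one_div_of_le <;> linarith
    calc _ ≤ (1/(2*a)) * 8 := mul_le_mul_of_nonneg_left (le_of_abs_le bd) (by positivity)
      _ ≤ 1/32 * 8 := by gcongr
      _ = _ := by norm_num
  have : (1/4:ℝ) ≤ a / 2 * dD a := by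
    unfold dD
    norm_num at key e1 ⊢
    linarith
  rw [div_le_iff₀ (by positivity)]
  linarith

lemma dD_abs_le {a : ℝ} : dD (-a) = - dD a := by
  unfold dD; rw [← integral_neg]; congr 1; ext x; simp

lemma dD_upper {a : ℝ} (ha : 0 ≤ a) : dD a ≤ a := by
  have j1 : IntegrableOn (fun x => a * (x * Real.exp (-(1/2) * x ^ 2))) (Set.Ioi 0) :=
      ((integrable_mul_exp_neg_mul_sq (by norm_num)).const_mul a).integrableOn
  have key := integral_Ioi_of_hasDerivAt_of_tendsto' (a := 0) (m := 0)
    (f := fun x => - Real.exp (-(1/2) * x ^ 2)) (f' := fun x => x * Real.exp (-(1/2) * x ^ 2))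
    (fun x _ => by
      refine (hasDerivE x).neg.congr_deriv ?_; ring)
    (integrable_mul_exp_neg_mul_sq (by norm_num)).integrableOn
    (tendsto_of_bound fun x => by
      rw [abs_neg, Real.abs_exp]
      have := Real.exp_pos (-(1/2) * x ^ 2)
      nlinarith [sq_nonneg x])
  have i1 : Integrable (fun x => Real.sin (a * x) * Real.exp (-(1/2) * x ^ 2)) := by
    refine int_of_bound (by fun_prop) fun x => ?_
    rw [abs_mul, Real.abs_exp]
    refine mul_le_mul_of_nonneg_right ?_ (Real.exp_pos _).le
    have := Real.abs_sin_le_one (a * x)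
    nlinarith [sq_nonneg x]
  calc dD a ≤ ∫ x in Set.Ioi (0:ℝ), a * (x * Real.exp (-(1/2) * x ^ 2)) := by
        refine setIntegral_mono_on i1.integrableOn j1 measurableSet_Ioi fun x hx => ?_
        rw [← mul_assoc]
        refine mul_le_mul_of_nonneg_right (Real.sin_le (mul_nonneg ha (le_of_lt hx))) (Real.exp_pos _).le
    _ = a := by rw [integral_const_mul, key]; simp

noncomputable def fF (a : ℝ) : ℝ := ∫ x, sg x * Real.sin (a * x) ∂(gaussianReal 0 1)

lemma fF_eq (a : ℝ) : fF a = 2 * (Real.sqrt (2 * Real.pi))⁻¹ * dD a := by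
  unfold fF dD
  rw [integral_gaussianReal_eq_integral_smul (by norm_num)]
  have : ∀ x, gaussianPDFReal 0 1 x • (sg x * Real.sin (a * x)) =
      (fun y => (Real.sqrt (2 * Real.pi))⁻¹ * (Real.sin (a * y) * Real.exp (-(1/2) * y ^ 2))) |x| := by
    intro x
    simp only [gaussianPDFReal, sg, smul_eq_mul, sq_abs]
    have e : -(x - 0) ^ 2 / (2 * ((1 : NNReal) : ℝ)) = -(1/2) * x ^ 2 := by push_cast; ring
    rw [e]
    split_ifs with h
    · rw [abs_of_nonneg h]; push_cast; ring_nf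
    · rw [abs_of_neg (not_le.mp h)]; simp; ring
  simp_rw [this]
  rw [integral_comp_abs (f := fun y => (Real.sqrt (2 * Real.pi))⁻¹ * (Real.sin (a * y) * Real.exp (-(1/2) * y ^ 2))), integral_const_mul]
  ring

lemma sqrt2pi_bounds : 2 ≤ Real.sqrt (2 * Real.pi) ∧ Real.sqrt (2 * Real.pi) ≤ 3 := by
  constructor
  · apply Real.le_sqrt_of_sq_le; linarith [Real.pi_gt_three]
  · rw [Real.sqrt_le_left (by norm_num)]; linarith [Real.pi_le_four]

lemma fF_nonneg {a : ℝ} (ha : 0 ≤ a) : 0 ≤ fF a := by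
  rw [fF_eq]; have := dD_nonneg ha; positivity

lemma fF_large {a : ℝ} (ha : 16 ≤ a) : 1 / (3 * a) ≤ fF a := by
  rw [fF_eq]
  obtain ⟨h1, h2⟩ := sqrt2pi_bounds
  have h3 : (1/3:ℝ) ≤ (Real.sqrt (2 * Real.pi))⁻¹ := by
    rw [← one_div]; apply one_div_le_one_div_of_le <;> linarith
  have := dD_large ha
  have ha0 : 0 < a := by linarith
  calc 1 / (3 * a) = 2 * (1/3) * (1 / (2 * a)) := by field_simp
    _ ≤ _ := by gcongr

lemma fF_neg_ge {a : ℝ} (ha : a ≤ 0) : a ≤ fF a := by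
  rw [fF_eq]
  obtain ⟨h1, h2⟩ := sqrt2pi_bounds
  have h3 : (Real.sqrt (2 * Real.pi))⁻¹ ≤ (1/2:ℝ) := by
    rw [← one_div]; apply one_div_le_one_div_of_le <;> linarith
  have e : dD a = - dD (-a) := by rw [← dD_abs_le, neg_neg]
  have u := dD_upper (a := -a) (by linarith)
  have l := dD_nonneg (a := -a) (by linarith)
  have : (Real.sqrt (2 * Real.pi))⁻¹ * dD (-a) ≤ 1/2 * (-a) := by gcongr
  rw [e]; linarith

noncomputable abbrev gam (n : ℕ) : Measure (Fin n → ℝ) := Measure.pi fun _ : Fin n => gaussianReal 0 1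

def lin {n : ℕ} (p : Fin n → ℝ) (g : Fin n → ℝ) : ℝ := ∑ t, p t * g t

lemma measurable_lin {n : ℕ} (p : Fin n → ℝ) : Measurable (lin p) := by
  unfold lin; fun_prop

lemma coord_indep (n : ℕ) : iIndepFun (fun (i : Fin n) (g : Fin n → ℝ) => g i) (gam n) :=
  iIndepFun_pi (X := fun _ x => x) (fun _ => aemeasurable_id)

lemma coord_map {n : ℕ} (i : Fin n) : (gam n).map (fun g => g i) = gaussianReal 0 1 :=
  (measurePreserving_eval (fun _ : Fin n => gaussianReal 0 1) i).map_eq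

lemma gauss_id (n : ℕ) : HasGaussianLaw (fun g : Fin n → ℝ => g) (gam n) := by
  refine iIndepFun.hasGaussianLaw (X := fun (i : Fin n) (g : Fin n → ℝ) => g i) (fun i => ?_) (coord_indep n)
  constructor
  rw [coord_map]; infer_instance

lemma coord_memLp {n : ℕ} (i : Fin n) : MemLp (fun g : Fin n → ℝ => g i) 2 (gam n) :=
  ((gauss_id n).eval i).memLp_two

lemma coord_cov {n : ℕ} (i j : Fin n) :
    cov[fun g : Fin n → ℝ => g i, fun g => g j; gam n] = if i = j then 1 else 0 := by
  split_ifs with h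
  · subst h
    rw [covariance_self (measurable_pi_apply i).aemeasurable]
    have := variance_id_gaussianReal (μ := 0) (v := 1)
    rw [← coord_map i, variance_map (X := id) (Y := fun g : Fin n → ℝ => g i) aemeasurable_id (measurable_pi_apply i).aemeasurable] at this
    simpa [Function.comp_def] using this
  · exact ((coord_indep n).indepFun h).covariance_eq_zero (coord_memLp i) (coord_memLp j)

lemma lin_cov {n : ℕ} (p q : Fin n → ℝ) : cov[lin p, lin q; gam n] = ∑ t, p t * q t := by
  unfold lin
  rw [covariance_fun_sum_fun_sum (fun i => (coord_memLp i).const_mul _) (fun i => (coord_memLp i).const_mul _)]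
  simp_rw [covariance_const_mul_left, covariance_const_mul_right, coord_cov]
  simp

lemma lin_gauss {n : ℕ} (p : Fin n → ℝ) : HasGaussianLaw (lin p) (gam n) := by
  have := (gauss_id n).map_fun (∑ t, p t • ContinuousLinearMap.proj (R := ℝ) (φ := fun _ : Fin n => ℝ) t)
  have e : lin p = fun g => (∑ t, p t • ContinuousLinearMap.proj (R := ℝ) (φ := fun _ : Fin n => ℝ) t) g := by
    ext g; simp [lin]
  rw [e]; exact this

lemma lin_mean {n : ℕ} (p : Fin n → ℝ) : ∫ g, lin p g ∂(gam n) = 0 := by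
  unfold lin
  rw [integral_finsetSum _ (fun i _ => ((coord_memLp i).integrable (by norm_num)).const_mul _)]
  refine Finset.sum_eq_zero fun i _ => ?_
  rw [integral_const_mul]
  have := integral_id_gaussianReal (μ := 0) (v := 1)
  rw [← coord_map i, integral_map (measurable_pi_apply i).aemeasurable (by fun_prop)] at this
  rw [this, mul_zero]

lemma lin_map {n : ℕ} (p : Fin n → ℝ) :
    (gam n).map (lin p) = gaussianReal 0 (∑ t, p t ^ 2).toNNReal := by
  rw [(lin_gauss p).map_eq_gaussianReal, lin_mean, ← covariance_self (measurable_lin p).aemeasurable, lin_cov]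
  simp_rw [pow_two]

lemma lin_indep_s13 {n : ℕ} {κ : Type*} [Finite κ] (p : Fin n → ℝ) (q : κ → Fin n → ℝ)
    (h : ∀ k, ∑ t, p t * q k t = 0) :
    IndepFun (lin p) (fun g k => lin (q k) g) (gam n) := by
  have hG : HasGaussianLaw (fun g => (fun _ : Unit => lin p g, fun k => lin (q k) g)) (gam n) := by
    have := Fintype.ofFinite κ
    have := (gauss_id n).map_fun
      ((ContinuousLinearMap.pi fun _ : Unit => ∑ t, p t • ContinuousLinearMap.proj (R := ℝ) (φ := fun _ : Fin n => ℝ) t).prod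
       (ContinuousLinearMap.pi fun k : κ => ∑ t, q k t • ContinuousLinearMap.proj (R := ℝ) (φ := fun _ : Fin n => ℝ) t))
    refine this.congr (Filter.Eventually.of_forall fun g => ?_)
    apply Prod.ext <;> (ext; simp [lin])
  have := HasGaussianLaw.indepFun_of_covariance_eval (X := fun _ : Unit => lin p) (Y := fun k => lin (q k)) hG
    (fun _ k => by rw [lin_cov, h])
  exact this.comp (φ := fun f : Unit → ℝ => f ()) (ψ := id) (measurable_pi_apply ()) measurable_id

lemma lin_indep2 {n : ℕ} (p q : Fin n → ℝ) (h : ∑ t, p t * q t = 0) :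
    IndepFun (lin p) (lin q) (gam n) := 
  (lin_indep_s13 p (fun _ : Unit => q) (fun _ => h)).comp (φ := id) (ψ := fun f : Unit → ℝ => f ())
    measurable_id (measurable_pi_apply ())

lemma E_cos_sin {n : ℕ} (r : Fin n → ℝ) (t : ℝ) :
    ∫ g, Real.cos (t * lin r g) ∂(gam n) = Real.exp (-(t ^ 2 * ∑ s, r s ^ 2) / 2) ∧
    ∫ g, Real.sin (t * lin r g) ∂(gam n) = 0 := by
  have h := charFun_gaussianReal (μ := 0) (v := (∑ s, r s ^ 2).toNNReal) t
  rw [← lin_map, charFun_apply_real, integral_map (measurable_lin r).aemeasurable (by fun_prop)] at h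
  have hint : Integrable (fun g => Complex.exp (t * (lin r g) * Complex.I)) (gam n) := by
    refine (integrable_const (1:ℝ)).mono' ?_ (Filter.Eventually.of_forall fun g => ?_)
    · have := measurable_lin r
      exact Measurable.aestronglyMeasurable (by fun_prop)
    · rw [← Complex.ofReal_mul, Complex.norm_exp_ofReal_mul_I]
  have hs : (0:ℝ) ≤ ∑ s, r s ^ 2 := Finset.sum_nonneg fun _ _ => sq_nonneg _
  have e : Complex.exp (t * ((0:ℝ):ℂ) * Complex.I - ((∑ s, r s ^ 2).toNNReal : ℝ) * t ^ 2 / 2) =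
     ((Real.exp (-(t ^ 2 * ∑ s, r s ^ 2) / 2) : ℝ) : ℂ) := by
    rw [Real.coe_toNNReal _ hs]
    push_cast
    congr 1; ring
  have h' := h.trans e
  constructor
  · have := congrArg Complex.re h'
    rw [← RCLike.re_eq_complex_re, ← integral_re hint] at this
    rw [RCLike.re_eq_complex_re, Complex.ofReal_re] at this
    simpa [← Complex.ofReal_mul, Complex.exp_ofReal_mul_I_re] using this
  · have := congrArg Complex.im h'
    rw [← RCLike.im_eq_complex_im, ← integral_im hint] at this
    rw [RCLike.im_eq_complex_im, Complex.ofReal_im] at this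
    simpa [← Complex.ofReal_mul, Complex.exp_ofReal_mul_I_im] using this

lemma int_bdd {n : ℕ} {f : (Fin n → ℝ) → ℝ} (hf : Measurable f) {B : ℝ} (hB : ∀ g, |f g| ≤ B) :
    Integrable f (gam n) :=
  (integrable_const B).mono' hf.aestronglyMeasurable (Filter.Eventually.of_forall hB)

lemma corr_eq {n : ℕ} (p q : Fin n → ℝ) (hp : ∑ t, p t ^ 2 = 1) (hq : ∑ t, q t ^ 2 = 1) (c : ℝ)
    (hc : ∑ t, p t * q t = c) (t : ℝ) :
    ∫ g, sg (lin p g) * Real.sin (t * lin q g) ∂(gam n) =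
      Real.exp (-(t ^ 2 * (1 - c ^ 2)) / 2) * fF (t * c) := by
  set r : Fin n → ℝ := fun s => q s - c * p s with hr
  have h0 : ∑ s, p s * r s = 0 := by
    have : ∀ s, p s * r s = p s * q s - c * p s ^ 2 := fun s => by rw [hr]; ring
    simp_rw [this, Finset.sum_sub_distrib, ← Finset.mul_sum, hp, hc]; ring
  have h1 : ∑ s, r s ^ 2 = 1 - c ^ 2 := by
    have : ∀ s, r s ^ 2 = q s ^ 2 - 2 * c * (p s * q s) + c ^ 2 * p s ^ 2 := fun s => by rw [hr]; ring
    simp_rw [this, Finset.sum_add_distrib, Finset.sum_sub_distrib, ← Finset.mul_sum, hp, hq, hc]; ring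
  have hlin : ∀ g, lin q g = c * lin p g + lin r g := fun g => by
    simp only [lin, hr, Finset.mul_sum, ← Finset.sum_add_distrib]
    exact Finset.sum_congr rfl fun s _ => by ring
  have hind := lin_indep2 p r h0
  obtain ⟨e1, e2⟩ := E_cos_sin r t
  rw [h1] at e1
  have mp := measurable_lin p
  have mr := measurable_lin r
  have ms := measurable_sg
  have m1 : Measurable fun x => sg x * Real.sin (t * c * x) := by fun_prop
  have m2 : Measurable fun x => sg x * Real.cos (t * c * x) := by fun_prop
  have m3 : Measurable fun x => Real.cos (t * x) := by fun_prop
  have m4 : Measurable fun x => Real.sin (t * x) := by fun_prop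
  have b1 : ∀ x, |sg x * Real.sin (t * c * x)| ≤ 1 := fun x => by
    rw [abs_mul, sg_abs, one_mul]; exact Real.abs_sin_le_one _
  have b2 : ∀ x, |sg x * Real.cos (t * c * x)| ≤ 1 := fun x => by
    rw [abs_mul, sg_abs, one_mul]; exact Real.abs_cos_le_one _
  have I1 : Integrable (fun g => (sg (lin p g) * Real.sin (t * c * lin p g)) * Real.cos (t * lin r g)) (gam n) := by
    refine int_bdd ((m1.comp mp).mul (m3.comp mr)) (B := 1) fun g => ?_
    rw [abs_mul]
    exact mul_le_one₀ (b1 _) (abs_nonneg _) (Real.abs_cos_le_one _)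
  have I2 : Integrable (fun g => (sg (lin p g) * Real.cos (t * c * lin p g)) * Real.sin (t * lin r g)) (gam n) := by
    refine int_bdd ((m2.comp mp).mul (m4.comp mr)) (B := 1) fun g => ?_
    rw [abs_mul]
    exact mul_le_one₀ (b2 _) (abs_nonneg _) (Real.abs_sin_le_one _)
  have : ∀ g, sg (lin p g) * Real.sin (t * lin q g) =
      (sg (lin p g) * Real.sin (t * c * lin p g)) * Real.cos (t * lin r g) +
      (sg (lin p g) * Real.cos (t * c * lin p g)) * Real.sin (t * lin r g) := fun g => by
    rw [hlin, show t * (c * lin p g + lin r g) = t * c * lin p g + t * lin r g by ring, Real.sin_add]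
    ring
  simp_rw [this]
  rw [integral_add I1 I2]
  rw [hind.integral_fun_comp_mul_comp (f := fun x => sg x * Real.sin (t * c * x)) (g := fun x => Real.cos (t * x))
    mp.aemeasurable mr.aemeasurable m1.aestronglyMeasurable m3.aestronglyMeasurable]
  rw [hind.integral_fun_comp_mul_comp (f := fun x => sg x * Real.cos (t * c * x)) (g := fun x => Real.sin (t * x))
    mp.aemeasurable mr.aemeasurable m2.aestronglyMeasurable m4.aestronglyMeasurable]
  rw [e1, e2, mul_zero, add_zero, mul_comm]
  congr 1
  have hm := lin_map p
  rw [hp, Real.toNNReal_one] at hm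
  rw [fF, ← hm, integral_map mp.aemeasurable m1.aestronglyMeasurable]

lemma corr_ge {n : ℕ} (p q : Fin n → ℝ) (hp : ∑ t, p t ^ 2 = 1) (hq : ∑ t, q t ^ 2 = 1) {η : ℝ}
    (hη : η ≤ 1) (hc : -η ≤ ∑ t, p t * q t) {t : ℝ} (ht : 0 ≤ t) :
    -(t * Real.exp (-(t ^ 2 * (1 - η ^ 2)) / 2)) ≤
      ∫ g, sg (lin p g) * Real.sin (t * lin q g) ∂(gam n) := by
  rw [corr_eq p q hp hq _ rfl t]
  set c := ∑ t, p t * q t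
  rcases le_total 0 c with h | h
  · have := fF_nonneg (a := t * c) (by positivity)
    have h2 : 0 ≤ t * Real.exp (-(t ^ 2 * (1 - η ^ 2)) / 2) := by positivity
    have h3 : 0 ≤ Real.exp (-(t ^ 2 * (1 - c ^ 2)) / 2) * fF (t * c) := by positivity
    linarith
  · have h1 := fF_neg_ge (a := t * c) (mul_nonpos_of_nonneg_of_nonpos ht h)
    have h2 : -t ≤ fF (t * c) := by nlinarith
    have h3 : Real.exp (-(t ^ 2 * (1 - c ^ 2)) / 2) ≤ Real.exp (-(t ^ 2 * (1 - η ^ 2)) / 2) := by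
      apply Real.exp_le_exp.mpr
      have : c ^ 2 ≤ η ^ 2 := by nlinarith
      nlinarith [mul_le_mul_of_nonneg_left this (sq_nonneg t)]
    have h4 := Real.exp_pos (-(t ^ 2 * (1 - c ^ 2)) / 2)
    have h5 := mul_le_mul_of_nonneg_left h2 h4.le
    have h6 := mul_le_mul_of_nonneg_left h3 ht
    linarith

lemma EZ_ge {n : ℕ} (N : Finset (Fin n)) (w : Fin n → ℝ) (hw : ∀ j, 0 ≤ w j) (p : Fin n → Fin n → ℝ)
    (hp : ∀ j ∈ N, ∑ t, p j t ^ 2 = 1) {η : ℝ} (hη : η ≤ 1)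
    (hc : ∀ j ∈ N, ∀ k ∈ N, -η ≤ ∑ t, p j t * p k t) {t d : ℝ} (ht : 16 ≤ t) (hd : (N.card : ℝ) ≤ d)
    (hd0 : 0 < d)
    (hbig : 6 * t ^ 2 * d * Real.exp (-(t ^ 2 * (1 - η ^ 2)) / 2) ≤ 1) :
    (∑ j ∈ N, w j) / (6 * t * d) ≤ ∫ g, |∑ j ∈ N, w j * sg (lin (p j) g)| ∂(gam n) := by
  set Wi := ∑ j ∈ N, w j with hWi
  have hW0 : 0 ≤ Wi := Finset.sum_nonneg fun j _ => hw j
  have ht0 : 0 < t := by linarith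
  rcases hW0.eq_or_lt with h0 | hWpos
  · rw [← h0, zero_div]; exact integral_nonneg fun g => abs_nonneg _
  set e := Real.exp (-(t ^ 2 * (1 - η ^ 2)) / 2) with he
  have he0 : 0 < e := Real.exp_pos _
  have ms := measurable_sg
  have ml := fun j => measurable_lin (p j)
  have mZ : Measurable fun g => ∑ j ∈ N, w j * sg (lin (p j) g) := by fun_prop
  have bZ : ∀ g, |∑ j ∈ N, w j * sg (lin (p j) g)| ≤ Wi := fun g => by
    refine (Finset.abs_sum_le_sum_abs _ _).trans (Finset.sum_le_sum fun j _ => ?_)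
    rw [abs_mul, sg_abs, mul_one, abs_of_nonneg (hw j)]
  have bY : ∀ g, |∑ j ∈ N, w j * Real.sin (t * lin (p j) g)| ≤ Wi := fun g => by
    refine (Finset.abs_sum_le_sum_abs _ _).trans (Finset.sum_le_sum fun j _ => ?_)
    rw [abs_mul, abs_of_nonneg (hw j)]
    exact mul_le_of_le_one_right (hw j) (Real.abs_sin_le_one _)
  have hInt : ∀ j k, Integrable (fun g => sg (lin (p j) g) * Real.sin (t * lin (p k) g)) (gam n) := fun j k => by
    refine int_bdd (B := 1) (by fun_prop) fun g => ?_
    rw [abs_mul, sg_abs, one_mul]; exact Real.abs_sin_le_one _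
  have step1 : ∫ g, (∑ j ∈ N, w j * sg (lin (p j) g)) * (∑ k ∈ N, w k * Real.sin (t * lin (p k) g)) ∂(gam n)
      = ∑ j ∈ N, ∑ k ∈ N, w j * w k * ∫ g, sg (lin (p j) g) * Real.sin (t * lin (p k) g) ∂(gam n) := by
    have : ∀ g, (∑ j ∈ N, w j * sg (lin (p j) g)) * (∑ k ∈ N, w k * Real.sin (t * lin (p k) g)) =
        ∑ j ∈ N, ∑ k ∈ N, w j * w k * (sg (lin (p j) g) * Real.sin (t * lin (p k) g)) := fun g => by
      rw [Finset.sum_mul_sum]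
      exact Finset.sum_congr rfl fun j _ => Finset.sum_congr rfl fun k _ => by ring
    simp_rw [this]
    rw [integral_finsetSum _ fun j _ => integrable_finsetSum _ fun k _ => (hInt j k).const_mul _]
    refine Finset.sum_congr rfl fun j _ => ?_
    rw [integral_finsetSum _ fun k _ => (hInt j k).const_mul _]
    exact Finset.sum_congr rfl fun k _ => by rw [integral_const_mul]
  have hpsi : ∀ j ∈ N, ∀ k ∈ N, (if j = k then 1 / (3 * t) else 0) - t * e ≤
      ∫ g, sg (lin (p j) g) * Real.sin (t * lin (p k) g) ∂(gam n) := fun j hj k hk => by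
    split_ifs with h
    · subst h
      rw [corr_eq (p j) (p j) (hp j hj) (hp j hj) 1 (by simp_rw [← pow_two]; exact hp j hj)]
      have := fF_large ht
      have : 0 < t * e := by positivity
      simp; simp at *; linarith
    · have := corr_ge (p j) (p k) (hp j hj) (hp k hk) hη (hc j hj k hk) ht0.le
      linarith
  have step2 : 1 / (3 * t) * (∑ j ∈ N, w j ^ 2) - t * e * Wi ^ 2 ≤
      ∑ j ∈ N, ∑ k ∈ N, w j * w k * ∫ g, sg (lin (p j) g) * Real.sin (t * lin (p k) g) ∂(gam n) := by
    calc _ = ∑ j ∈ N, ∑ k ∈ N, w j * w k * ((if j = k then 1 / (3 * t) else 0) - t * e) := by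
          simp_rw [mul_sub, Finset.sum_sub_distrib]
          congr 1
          · rw [Finset.mul_sum]
            refine Finset.sum_congr rfl fun j hj => ?_
            simp [hj]; ring
          · rw [pow_two, hWi, Finset.sum_mul_sum, Finset.mul_sum]
            refine Finset.sum_congr rfl fun j hj => ?_
            rw [Finset.mul_sum]
            exact Finset.sum_congr rfl fun k _ => by ring
      _ ≤ _ := Finset.sum_le_sum fun j hj => Finset.sum_le_sum fun k hk =>
          mul_le_mul_of_nonneg_left (hpsi j hj k hk) (mul_nonneg (hw j) (hw k))
  have cs : Wi ^ 2 ≤ d * ∑ j ∈ N, w j ^ 2 := by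
    refine (sq_sum_le_card_mul_sum_sq (s := N) (f := w)).trans ?_
    exact mul_le_mul_of_nonneg_right hd (Finset.sum_nonneg fun _ _ => sq_nonneg _)
  have step3 : Wi ^ 2 / (6 * t * d) ≤ 1 / (3 * t) * (∑ j ∈ N, w j ^ 2) - t * e * Wi ^ 2 := by
    have h1 : Wi ^ 2 / d ≤ ∑ j ∈ N, w j ^ 2 := by rw [div_le_iff₀ hd0]; linarith
    have h2 : t * e ≤ 1 / (6 * t * d) := by
      rw [le_div_iff₀ (by positivity)]; linarith
    have h3 := mul_le_mul_of_nonneg_right h2 (sq_nonneg Wi)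
    have h4 := mul_le_mul_of_nonneg_left h1 (by positivity : 0 ≤ 1 / (3 * t))
    have h5 : 1 / (3 * t) * (Wi ^ 2 / d) = 2 * (Wi ^ 2 / (6 * t * d)) := by field_simp; norm_num
    have h6 : 1 / (6 * t * d) * Wi ^ 2 = Wi ^ 2 / (6 * t * d) := by ring
    linarith
  have step4 : ∫ g, (∑ j ∈ N, w j * sg (lin (p j) g)) * (∑ k ∈ N, w k * Real.sin (t * lin (p k) g)) ∂(gam n)
      ≤ (∫ g, |∑ j ∈ N, w j * sg (lin (p j) g)| ∂(gam n)) * Wi := by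
    rw [← integral_mul_const]
    refine integral_mono (int_bdd (B := Wi * Wi) (by fun_prop) fun g => ?_)
      ((int_bdd (B := Wi) (by fun_prop) fun g => ?_).mul_const _) fun g => ?_
    · rw [abs_mul]; exact mul_le_mul (bZ g) (bY g) (abs_nonneg _) hW0
    · rw [abs_abs]; exact bZ g
    · refine (le_abs_self _).trans ?_
      rw [abs_mul]
      exact mul_le_mul_of_nonneg_left (bY g) (abs_nonneg _)
  have fin : Wi / (6 * t * d) * Wi ≤ (∫ g, |∑ j ∈ N, w j * sg (lin (p j) g)| ∂(gam n)) * Wi := by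
    have : Wi / (6 * t * d) * Wi = Wi ^ 2 / (6 * t * d) := by ring
    rw [this]; linarith
  exact le_of_mul_le_mul_right fin hWpos

lemma gauss_real (S : Set ℝ) : (gaussianReal 0 1).real S = ∫ x in S, gaussianPDFReal 0 1 x := by
  rw [Measure.real, gaussianReal_apply_eq_integral 0 (by norm_num), ENNReal.toReal_ofReal]
  exact integral_nonneg fun x => gaussianPDFReal_nonneg _ _ _

lemma pdf_le (x : ℝ) : gaussianPDFReal 0 1 x ≤ 1 / 2 := by
  obtain ⟨h1, h2⟩ := sqrt2pi_bounds
  have h3 : (Real.sqrt (2 * Real.pi))⁻¹ ≤ (1/2:ℝ) := by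
    rw [← one_div]; apply one_div_le_one_div_of_le <;> linarith
  simp only [gaussianPDFReal, NNReal.coe_one, mul_one]
  have h4 : Real.exp (-(x - 0) ^ 2 / 2) ≤ 1 := by
    apply Real.exp_le_one_iff.mpr; nlinarith [sq_nonneg (x - 0)]
  calc _ ≤ (1/2 : ℝ) * 1 := mul_le_mul h3 h4 (Real.exp_pos _).le (by norm_num)
    _ = _ := by norm_num

lemma pdf_ge {x : ℝ} (hx : |x| ≤ 1) : 1 / 6 ≤ gaussianPDFReal 0 1 x := by
  obtain ⟨h1, h2⟩ := sqrt2pi_bounds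
  have h3 : (1/3:ℝ) ≤ (Real.sqrt (2 * Real.pi))⁻¹ := by
    rw [← one_div]; apply one_div_le_one_div_of_le <;> linarith
  simp only [gaussianPDFReal, NNReal.coe_one, mul_one]
  have h4 : 1 / 2 ≤ Real.exp (-(x - 0) ^ 2 / 2) := by
    have := Real.add_one_le_exp (-(x - 0) ^ 2 / 2)
    have : x ^ 2 ≤ 1 := (sq_le_one_iff_abs_le_one x).mpr hx
    nlinarith
  calc (1/6:ℝ) = 1/3 * (1/2) := by norm_num
    _ ≤ _ := by gcongr

lemma gauss_upper {δ : ℝ} (hδ : 0 ≤ δ) : (gaussianReal 0 1).real (Set.Icc (-δ) δ) ≤ δ := by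
  rw [gauss_real]
  calc _ ≤ ∫ x in Set.Icc (-δ) δ, (1/2:ℝ) :=
        integral_mono (integrable_gaussianPDFReal 0 1).integrableOn (by simp) pdf_le
    _ = δ := by
      simp only [integral_const, measureReal_restrict_apply_univ, Real.volume_real_Icc, smul_eq_mul]
      rw [max_eq_left (by linarith)]; ring

lemma gauss_lower1 {ε : ℝ} (h0 : 0 < ε) (h1 : ε ≤ 1) : ε / 6 ≤ (gaussianReal 0 1).real (Set.Ico 0 ε) := by
  rw [gauss_real]
  calc ε / 6 = ∫ x in Set.Ico 0 ε, (1/6:ℝ) := by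
        simp only [integral_const, measureReal_restrict_apply_univ, Real.volume_real_Ico, smul_eq_mul]
        rw [max_eq_left (by linarith)]; ring
    _ ≤ _ := setIntegral_mono_on (by simp) (integrable_gaussianPDFReal 0 1).integrableOn measurableSet_Ico
        fun x hx => pdf_ge (by rw [abs_le]; constructor <;> linarith [hx.1, hx.2])

lemma gauss_lower2 {ε : ℝ} (h0 : 0 < ε) (h1 : ε ≤ 1) : ε / 6 ≤ (gaussianReal 0 1).real (Set.Ioo (-ε) 0) := by
  rw [gauss_real]
  calc ε / 6 = ∫ x in Set.Ioo (-ε) 0, (1/6:ℝ) := by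
        simp only [integral_const, measureReal_restrict_apply_univ, Real.volume_real_Ioo, smul_eq_mul]
        rw [max_eq_left (by linarith)]; ring
    _ ≤ _ := setIntegral_mono_on (by simp) (integrable_gaussianPDFReal 0 1).integrableOn measurableSet_Ioo
        fun x hx => pdf_ge (by rw [abs_le]; constructor <;> linarith [hx.1, hx.2])

lemma ind_lin {n : ℕ} (p : Fin n → ℝ) (hp : ∑ t, p t ^ 2 = 1) {S : Set ℝ} (hS : MeasurableSet S) :
    ∫ g, S.indicator (fun _ => (1:ℝ)) (lin p g) ∂(gam n) = (gaussianReal 0 1).real S := by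
  have hm := lin_map p
  rw [hp, Real.toNNReal_one] at hm
  rw [← hm, ← integral_map (φ := lin p) (f := S.indicator (fun _ => (1:ℝ))) (measurable_lin p).aemeasurable
    (measurable_const.indicator hS).aestronglyMeasurable, hm]
  simp [integral_indicator hS]

/-- pointwise inequality -/
lemma pointwise {n : ℕ} (N : Finset (Fin n)) (w : Fin n → ℝ) (hw : ∀ j, 0 ≤ w j)
    (ρ σ b : Fin n → ℝ) (hρ : ∀ j ∈ N, |ρ j| ≤ 1) (hσ : ∀ j ∈ N, 1 / 8 ≤ σ j)
    {ε : ℝ} (hε : 0 < ε) (s : ℝ) (h y : Fin n → ℝ)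
    (hy : ∀ j ∈ N, b j * y j = ρ j * s + σ j * h j) :
    (Set.Ico 0 ε).indicator (fun _ => (1:ℝ)) s * max 0 (-∑ j ∈ N, w j * sg (h j)) +
    (Set.Ioo (-ε) 0).indicator (fun _ => (1:ℝ)) s * max 0 (∑ j ∈ N, w j * sg (h j)) -
    ∑ j ∈ N, 2 * w j * ((Set.Icc (-ε) ε).indicator (fun _ => (1:ℝ)) s *
      (Set.Icc (-(16 * ε)) (16 * ε)).indicator (fun _ => (1:ℝ)) (h j)) ≤
    if |s| < ε then max 0 (2 * (∑ j ∈ N, if b j * (if 0 ≤ s then (1:ℝ) else -1) * y j ≤ -ε then w j else 0) -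
      ∑ j ∈ N, w j) else 0 := by
  split_ifs with hs hpos
  · rw [abs_lt] at hs
    have i1 : (Set.Ico 0 ε).indicator (fun _ => (1:ℝ)) s = 1 :=
      Set.indicator_of_mem (show s ∈ Set.Ico 0 ε from ⟨hpos, hs.2⟩) _
    have i2 : (Set.Ioo (-ε) 0).indicator (fun _ => (1:ℝ)) s = 0 :=
      Set.indicator_of_notMem (fun hh => absurd hh.2 (not_lt.mpr hpos)) _
    have i3 : (Set.Icc (-ε) ε).indicator (fun _ => (1:ℝ)) s = 1 :=
      Set.indicator_of_mem (show s ∈ Set.Icc (-ε) ε from ⟨hs.1.le, hs.2.le⟩) _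
    rw [i1, i2, i3, one_mul, zero_mul, add_zero]
    rw [sub_le_iff_le_add]
    have key : -∑ j ∈ N, w j * sg (h j) ≤ (2 * (∑ j ∈ N, if b j * 1 * y j ≤ -ε then w j else 0) - ∑ j ∈ N, w j) +
        ∑ j ∈ N, 2 * w j * (1 * (Set.Icc (-(16 * ε)) (16 * ε)).indicator (fun _ => (1:ℝ)) (h j)) := by
      rw [Finset.mul_sum, ← Finset.sum_sub_distrib, ← Finset.sum_add_distrib, ← Finset.sum_neg_distrib]
      refine Finset.sum_le_sum fun j hj => ?_
      have hwj := hw j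
      have hρj := abs_le.mp (hρ j hj)
      have hσj := hσ j hj
      rw [mul_one, hy j hj]
      by_cases hm : h j ∈ Set.Icc (-(16 * ε)) (16 * ε)
      · rw [Set.indicator_of_mem hm]
        unfold sg; split_ifs <;> nlinarith
      · rw [Set.indicator_of_notMem hm]
        unfold sg
        by_cases h0 : 0 ≤ h j
        · rw [if_pos h0]; split_ifs <;> nlinarith
        · rw [if_neg h0]
          have : h j < -(16 * ε) := by
            by_contra hcon
            exact hm ⟨not_lt.mp hcon, by linarith⟩
          have : σ j * h j ≤ 1/8 * -(16 * ε) := by nlinarith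
          have : ρ j * s ≤ ε := by nlinarith
          rw [if_pos (by linarith)]; nlinarith
    have nn : 0 ≤ ∑ j ∈ N, 2 * w j * (1 * (Set.Icc (-(16 * ε)) (16 * ε)).indicator (fun _ => (1:ℝ)) (h j)) :=
      Finset.sum_nonneg fun j _ => mul_nonneg (by linarith [hw j])
        (mul_nonneg zero_le_one (Set.indicator_nonneg (fun _ _ => zero_le_one) _))
    exact max_le (add_nonneg (le_max_left _ _) nn) (key.trans (add_le_add_left (le_max_right _ _) _))
  · rw [abs_lt] at hs
    push Not at hpos
    have i1 : (Set.Ico 0 ε).indicator (fun _ => (1:ℝ)) s = 0 :=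
      Set.indicator_of_notMem (fun hh => absurd hh.1 (not_le.mpr hpos)) _
    have i2 : (Set.Ioo (-ε) 0).indicator (fun _ => (1:ℝ)) s = 1 :=
      Set.indicator_of_mem (show s ∈ Set.Ioo (-ε) 0 from ⟨hs.1, hpos⟩) _
    have i3 : (Set.Icc (-ε) ε).indicator (fun _ => (1:ℝ)) s = 1 :=
      Set.indicator_of_mem (show s ∈ Set.Icc (-ε) ε from ⟨hs.1.le, hs.2.le⟩) _
    rw [i1, i2, i3, one_mul, zero_mul, zero_add]
    rw [sub_le_iff_le_add]
    have key : ∑ j ∈ N, w j * sg (h j) ≤ (2 * (∑ j ∈ N, if b j * -1 * y j ≤ -ε then w j else 0) - ∑ j ∈ N, w j) +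
        ∑ j ∈ N, 2 * w j * (1 * (Set.Icc (-(16 * ε)) (16 * ε)).indicator (fun _ => (1:ℝ)) (h j)) := by
      rw [Finset.mul_sum, ← Finset.sum_sub_distrib, ← Finset.sum_add_distrib]
      refine Finset.sum_le_sum fun j hj => ?_
      have hwj := hw j
      have hρj := abs_le.mp (hρ j hj)
      have hσj := hσ j hj
      rw [show b j * -1 * y j = -(b j * y j) by ring, hy j hj]
      by_cases hm : h j ∈ Set.Icc (-(16 * ε)) (16 * ε)
      · rw [Set.indicator_of_mem hm]
        unfold sg; split_ifs <;> nlinarith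
      · rw [Set.indicator_of_notMem hm]
        unfold sg
        by_cases h0 : 0 ≤ h j
        · rw [if_pos h0]
          have : 16 * ε < h j := by
            by_contra hcon
            exact hm ⟨by linarith, not_lt.mp hcon⟩
          have : 1/8 * (16 * ε) ≤ σ j * h j := by nlinarith
          have : -ε ≤ ρ j * s := by nlinarith
          rw [if_pos (by linarith)]; nlinarith
        · rw [if_neg h0]; split_ifs <;> nlinarith
    have nn : 0 ≤ ∑ j ∈ N, 2 * w j * (1 * (Set.Icc (-(16 * ε)) (16 * ε)).indicator (fun _ => (1:ℝ)) (h j)) :=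
      Finset.sum_nonneg fun j _ => mul_nonneg (by linarith [hw j])
        (mul_nonneg zero_le_one (Set.indicator_nonneg (fun _ _ => zero_le_one) _))
    exact max_le (add_nonneg (le_max_left _ _) nn) (key.trans (add_le_add_left (le_max_right _ _) _))
  · rw [abs_lt] at hs
    have i1 : (Set.Ico 0 ε).indicator (fun _ => (1:ℝ)) s = 0 :=
      Set.indicator_of_notMem (fun hh => hs ⟨by linarith [hh.1], hh.2⟩) _
    have i2 : (Set.Ioo (-ε) 0).indicator (fun _ => (1:ℝ)) s = 0 :=
      Set.indicator_of_notMem (fun hh => hs ⟨hh.1, by linarith [hh.2]⟩) _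
    rw [i1, i2, zero_mul, zero_mul, add_zero, zero_sub, neg_nonpos]
    exact Finset.sum_nonneg fun j _ => mul_nonneg (by linarith [hw j])
        (mul_nonneg (Set.indicator_nonneg (fun _ _ => zero_le_one) _) (Set.indicator_nonneg (fun _ _ => zero_le_one) _))

noncomputable def gainI {n : ℕ} (N : Finset (Fin n)) (w b : Fin n → ℝ) (vi : Fin n → ℝ) (v : Fin n → Fin n → ℝ)
    (ε : ℝ) (g : Fin n → ℝ) : ℝ :=
  if |lin vi g| < ε then max 0 (2 * (∑ j ∈ N, if b j * (if 0 ≤ lin vi g then (1:ℝ) else -1) * lin (v j) g ≤ -ε then w j else 0) -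
      ∑ j ∈ N, w j) else 0

lemma gainI_int {n : ℕ} (N : Finset (Fin n)) (w b : Fin n → ℝ) (hw : ∀ j, 0 ≤ w j) (vi : Fin n → ℝ) (v : Fin n → Fin n → ℝ)
    (ε : ℝ) : Integrable (gainI N w b vi v ε) (gam n) := by
  have mi := measurable_lin vi
  have mv := fun j => measurable_lin (v j)
  have hW0 : 0 ≤ ∑ j ∈ N, w j := Finset.sum_nonneg fun j _ => hw j
  refine int_bdd (B := ∑ j ∈ N, w j) ?_ fun g => ?_
  · unfold gainI
    have ms : Measurable fun g => if 0 ≤ lin vi g then (1:ℝ) else -1 :=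
      Measurable.ite (measurableSet_le measurable_const mi) measurable_const measurable_const
    refine Measurable.ite (measurableSet_lt (by fun_prop) measurable_const) ?_ measurable_const
    refine Measurable.max measurable_const (Measurable.sub (Measurable.const_mul (Finset.measurable_fun_sum _ fun j _ => ?_) 2) measurable_const)
    exact Measurable.ite (measurableSet_le (by fun_prop) measurable_const) measurable_const measurable_const
  · unfold gainI
    have h1 : (∑ j ∈ N, if b j * (if 0 ≤ lin vi g then (1:ℝ) else -1) * lin (v j) g ≤ -ε then w j else 0) ≤ ∑ j ∈ N, w j :=
      Finset.sum_le_sum fun j _ => by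
        have := hw j
        by_cases hh : b j * (if 0 ≤ lin vi g then (1:ℝ) else -1) * lin (v j) g ≤ -ε
        · rw [if_pos hh]
        · rw [if_neg hh]; exact this
    by_cases hh : |lin vi g| < ε
    · rw [if_pos hh, abs_of_nonneg (le_max_left _ _)]
      exact max_le hW0 (by linarith)
    · rw [if_neg hh, abs_zero]; exact hW0

lemma vertex {n : ℕ} (N : Finset (Fin n)) (w b : Fin n → ℝ) (hw : ∀ j, 0 ≤ w j)
    (vi : Fin n → ℝ) (v p : Fin n → Fin n → ℝ) (ρ σ : Fin n → ℝ)
    (hvi : ∑ t, vi t ^ 2 = 1)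
    (hρ : ∀ j ∈ N, |ρ j| ≤ 1) (hσ : ∀ j ∈ N, 1 / 8 ≤ σ j)
    (hv : ∀ j ∈ N, ∀ t, b j * v j t = ρ j * vi t + σ j * p j t)
    (hp : ∀ j ∈ N, ∑ t, p j t ^ 2 = 1) (horth : ∀ j ∈ N, ∑ t, vi t * p j t = 0)
    {ε : ℝ} (hε : 0 < ε) (hε1 : ε ≤ 1) {B : ℝ}
    (hB : B ≤ ∫ g, |∑ j ∈ N, w j * sg (lin (p j) g)| ∂(gam n)) :
    ε / 6 * B - 32 * ε ^ 2 * ∑ j ∈ N, w j ≤ ∫ g, gainI N w b vi v ε g ∂(gam n) := by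
  have mi := measurable_lin vi
  have ms := measurable_sg
  have ml := fun j => measurable_lin (p j)
  set Z : (N → ℝ) → ℝ := fun y => ∑ j : N, w j * sg (y j) with hZ
  have mZ : Measurable Z := by fun_prop
  set H : (Fin n → ℝ) → (N → ℝ) := fun g j => lin (p j) g with hH
  have mH : Measurable H := measurable_pi_lambda _ fun j => ml j
  have hZH : ∀ g, ∑ j ∈ N, w j * sg (lin (p j) g) = Z (H g) := fun g => by
    rw [hZ, hH, ← Finset.sum_coe_sort N (fun j => w j * sg (lin (p j) g))]
  have hind : IndepFun (lin vi) H (gam n) := lin_indep_s13 vi (fun j : N => p j) fun j => horth j j.2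
  set i1 : ℝ → ℝ := (Set.Ico 0 ε).indicator (fun _ => (1:ℝ)) with hi1
  set i2 : ℝ → ℝ := (Set.Ioo (-ε) 0).indicator (fun _ => (1:ℝ)) with hi2
  set i3 : ℝ → ℝ := (Set.Icc (-ε) ε).indicator (fun _ => (1:ℝ)) with hi3
  set i4 : ℝ → ℝ := (Set.Icc (-(16 * ε)) (16 * ε)).indicator (fun _ => (1:ℝ)) with hi4
  have m1 : Measurable i1 := measurable_const.indicator measurableSet_Ico
  have m2 : Measurable i2 := measurable_const.indicator measurableSet_Ioo
  have m3 : Measurable i3 := measurable_const.indicator measurableSet_Icc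
  have m4 : Measurable i4 := measurable_const.indicator measurableSet_Icc
  have bi : ∀ (S : Set ℝ) (x : ℝ), |S.indicator (fun _ => (1:ℝ)) x| ≤ 1 := fun S x => by
    by_cases h : x ∈ S <;> simp [h]
  set Wi := ∑ j ∈ N, w j with hWi
  have hW0 : 0 ≤ Wi := Finset.sum_nonneg fun j _ => hw j
  have bZ : ∀ g, |Z (H g)| ≤ Wi := fun g => by
    rw [← hZH]
    refine (Finset.abs_sum_le_sum_abs _ _).trans (Finset.sum_le_sum fun j _ => ?_)
    rw [abs_mul, sg_abs, mul_one, abs_of_nonneg (hw j)]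
  have bm : ∀ x : ℝ, |x| ≤ Wi → |max 0 x| ≤ Wi := fun x hx => by
    rw [abs_of_nonneg (le_max_left _ _)]; exact max_le hW0 ((le_abs_self x).trans hx)
  have J1' : Integrable (fun g => max 0 (-Z (H g))) (gam n) :=
    int_bdd (B := Wi) (by fun_prop) fun g => bm _ (by rw [abs_neg]; exact bZ g)
  have J2' : Integrable (fun g => max 0 (Z (H g))) (gam n) :=
    int_bdd (B := Wi) (by fun_prop) fun g => bm _ (bZ g)
  have J1 : Integrable (fun g => i1 (lin vi g) * max 0 (-Z (H g))) (gam n) :=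
    int_bdd (B := 1 * Wi) (by fun_prop) fun g => by
      rw [abs_mul]; exact mul_le_mul (bi _ _) (bm _ (by rw [abs_neg]; exact bZ g)) (abs_nonneg _) zero_le_one
  have J2 : Integrable (fun g => i2 (lin vi g) * max 0 (Z (H g))) (gam n) :=
    int_bdd (B := 1 * Wi) (by fun_prop) fun g => by
      rw [abs_mul]; exact mul_le_mul (bi _ _) (bm _ (bZ g)) (abs_nonneg _) zero_le_one
  have J3 : ∀ j, Integrable (fun g => i3 (lin vi g) * i4 (lin (p j) g)) (gam n) := fun j =>
    int_bdd (B := 1 * 1) (by fun_prop) fun g => by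
      rw [abs_mul]; exact mul_le_mul (bi _ _) (bi _ _) (abs_nonneg _) zero_le_one
  have J3s : Integrable (fun g => ∑ j ∈ N, 2 * w j * (i3 (lin vi g) * i4 (lin (p j) g))) (gam n) :=
    integrable_finsetSum _ fun j _ => (J3 j).const_mul _
  have pw : ∀ g, i1 (lin vi g) * max 0 (-Z (H g)) + i2 (lin vi g) * max 0 (Z (H g)) -
      ∑ j ∈ N, 2 * w j * (i3 (lin vi g) * i4 (lin (p j) g)) ≤ gainI N w b vi v ε g := fun g => by
    rw [← hZH]
    refine pointwise N w hw ρ σ b hρ hσ hε (lin vi g) (fun j => lin (p j) g) (fun j => lin (v j) g) fun j hj => ?_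
    simp only [lin, Finset.mul_sum, ← Finset.sum_add_distrib]
    refine Finset.sum_congr rfl fun t _ => ?_
    have := hv j hj t
    linear_combination g t * this
  have le1 := integral_mono ((J1.add J2).sub J3s) (gainI_int N w b hw vi v ε) pw
  refine le_trans ?_ le1
  rw [integral_sub' (J1.add J2) J3s, integral_add' J1 J2]
  rw [hind.integral_fun_comp_mul_comp (f := i1) (g := fun y => max 0 (-Z y)) mi.aemeasurable mH.aemeasurable
    m1.aestronglyMeasurable (by fun_prop)]
  rw [hind.integral_fun_comp_mul_comp (f := i2) (g := fun y => max 0 (Z y)) mi.aemeasurable mH.aemeasurable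
    m2.aestronglyMeasurable (by fun_prop)]
  rw [ind_lin vi hvi measurableSet_Ico, ind_lin vi hvi measurableSet_Ioo]
  rw [integral_finsetSum _ fun j _ => (J3 j).const_mul _]
  have err : ∑ j ∈ N, ∫ g, 2 * w j * (i3 (lin vi g) * i4 (lin (p j) g)) ∂(gam n) ≤ 32 * ε ^ 2 * Wi := by
    rw [hWi, Finset.mul_sum]
    refine Finset.sum_le_sum fun j hj => ?_
    rw [integral_const_mul, (lin_indep2 vi (p j) (horth j hj)).integral_fun_comp_mul_comp (f := i3) (g := i4)
      mi.aemeasurable (ml j).aemeasurable m3.aestronglyMeasurable m4.aestronglyMeasurable,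
      ind_lin vi hvi measurableSet_Icc, ind_lin (p j) (hp j hj) measurableSet_Icc]
    have a1 := gauss_upper hε.le
    have a2 := gauss_upper (δ := 16 * ε) (by linarith)
    have a3 : (gaussianReal 0 1).real (Set.Icc (-ε) ε) * (gaussianReal 0 1).real (Set.Icc (-(16*ε)) (16*ε)) ≤ ε * (16 * ε) :=
      mul_le_mul a1 a2 measureReal_nonneg hε.le
    have := mul_le_mul_of_nonneg_left a3 (by linarith [hw j] : 0 ≤ 2 * w j)
    linarith
  have sumabs : ∫ g, |∑ j ∈ N, w j * sg (lin (p j) g)| ∂(gam n) =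
      ∫ g, max 0 (-Z (H g)) ∂(gam n) + ∫ g, max 0 (Z (H g)) ∂(gam n) := by
    rw [← integral_add J1' J2']
    refine integral_congr_ae (Filter.Eventually.of_forall fun g => ?_)
    simp only [hZH]
    rcases le_total 0 (Z (H g)) with h | h
    · rw [abs_of_nonneg h, max_eq_left (by linarith), max_eq_right h, zero_add]
    · rw [abs_of_nonpos h, max_eq_right (by linarith), max_eq_left h, add_zero]
  have g1 := gauss_lower1 hε hε1
  have g2 := gauss_lower2 hε hε1
  have n1 : 0 ≤ ∫ g, max 0 (-Z (H g)) ∂(gam n) := integral_nonneg fun g => le_max_left _ _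
  have n2 : 0 ≤ ∫ g, max 0 (Z (H g)) ∂(gam n) := integral_nonneg fun g => le_max_left _ _
  have f1 := mul_le_mul_of_nonneg_right g1 n1
  have f2 := mul_le_mul_of_nonneg_right g2 n2
  have f3 := mul_le_mul_of_nonneg_left hB (by positivity : 0 ≤ ε / 6)
  rw [sumabs] at f3
  linarith

lemma rho_low {r : ℝ} (h1 : -1 < r) (hm : gwRatio r ≤ 8 / 9) : 1 / 10 ≤ r := by
  unfold gwRatio at hm
  have hpi := Real.pi_pos
  rw [div_le_iff₀ (by linarith)] at hm
  by_contra hlt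
  push Not at hlt
  rcases le_or_gt 0 r with h0 | h0
  · have : 0 ≤ 2 / Real.pi * Real.arcsin r := mul_nonneg (by positivity) (Real.arcsin_nonneg.mpr h0)
    linarith
  · have ha : 0 ≤ Real.arcsin (-r) := Real.arcsin_nonneg.mpr (by linarith)
    have h2 := Real.mul_le_sin ha (Real.arcsin_le_pi_div_two _)
    rw [Real.sin_arcsin (by linarith) (by linarith), Real.arcsin_neg] at h2
    linarith

lemma rho_high {r : ℝ} (h1 : r ≤ 1) (h0 : 0 ≤ r) (hm : gwRatio r ≤ 8 / 9) : r ≤ 98 / 100 := by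
  unfold gwRatio at hm
  have hpi := Real.pi_pos
  rw [div_le_iff₀ (by linarith)] at hm
  have h3 : 2 / Real.pi * Real.arcsin r ≤ 7 / 9 := by linarith
  have h4 : Real.arcsin r ≤ 7 * Real.pi / 18 := by
    rw [div_mul_eq_mul_div, div_le_iff₀ hpi] at h3
    linarith
  have h5 : r ≤ Real.sin (7 * Real.pi / 18) := by
    rwa [Real.arcsin_le_iff_le_sin' ⟨by linarith, by linarith⟩] at h4
  have h6 : Real.sin (7 * Real.pi / 18) = Real.cos (Real.pi / 9) := by
    rw [← Real.cos_pi_div_two_sub]; congr 1; ring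
  have h7 := Real.cos_le_one_sub_mul_cos_sq (x := Real.pi / 9)
    (by rw [abs_of_pos (by positivity)]; linarith)
  have h8 : 2 / Real.pi ^ 2 * (Real.pi / 9) ^ 2 = 2 / 81 := by field_simp; norm_num
  rw [h8] at h7
  rw [h6] at h5
  linarith

lemma gw_half : gwRatio (1 / 2) = 8 / 9 := by
  unfold gwRatio
  have hpi := Real.pi_pos
  have : Real.arcsin (1 / 2) = Real.pi / 6 := by
    rw [← Real.sin_pi_div_six]
    exact Real.arcsin_sin (by linarith) (by linarith)
  rw [this]; field_simp; norm_num

lemma big_num {d : ℕ} (hd : 2 ≤ d) :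
    6 * (40 * Real.sqrt (Real.log d)) ^ 2 * (d:ℝ) *
      Real.exp (-((40 * Real.sqrt (Real.log d)) ^ 2 * (1 - (0.835:ℝ) ^ 2)) / 2) ≤ 1 := by
  have hd' : (2:ℝ) ≤ d := by exact_mod_cast hd
  have hL : 0 ≤ Real.log d := Real.log_nonneg (by linarith)
  have hLd : Real.log d ≤ d := Real.log_le_self (by linarith)
  rw [mul_pow, Real.sq_sqrt hL]
  have h1 : Real.exp (-(40 ^ 2 * Real.log d * (1 - (0.835:ℝ) ^ 2)) / 2) ≤ Real.exp (-(((20:ℕ):ℝ) * Real.log d)) := by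
    apply Real.exp_le_exp.mpr; push_cast; nlinarith
  have h2 : Real.exp (-(((20:ℕ):ℝ) * Real.log d)) = ((d:ℝ) ^ 20)⁻¹ := by
    rw [Real.exp_neg, Real.exp_nat_mul, Real.exp_log (by linarith)]
  rw [h2] at h1
  have h3 : (2:ℝ) ^ 14 ≤ (d:ℝ) ^ 14 := pow_le_pow_left₀ (by norm_num) hd' 14
  have h4 : (d:ℝ) ^ 16 ≤ (d:ℝ) ^ 20 := pow_le_pow_right₀ (by linarith) (by norm_num)
  have h5 : 6 * (40 ^ 2 * Real.log d) * (d:ℝ) ≤ (d:ℝ) ^ 20 := by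
    calc 6 * (40 ^ 2 * Real.log d) * (d:ℝ) ≤ 6 * (40 ^ 2 * (d:ℝ)) * (d:ℝ) := by gcongr
      _ = 9600 * (d:ℝ) ^ 2 := by ring
      _ ≤ (d:ℝ) ^ 14 * (d:ℝ) ^ 2 := by gcongr; linarith
      _ = (d:ℝ) ^ 16 := by ring
      _ ≤ _ := h4
  have h6 : (0:ℝ) < (d:ℝ) ^ 20 := by positivity
  calc _ ≤ (d:ℝ) ^ 20 * ((d:ℝ) ^ 20)⁻¹ := by gcongr
    _ = 1 := mul_inv_cancel₀ h6.ne'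

lemma vertex_bound {n : ℕ} (N : Finset (Fin n)) (w b : Fin n → ℝ) (hw : ∀ j, 0 ≤ w j)
    (hb : ∀ j, b j = 1 ∨ b j = -1) (vi : Fin n → ℝ) (v : Fin n → Fin n → ℝ)
    (hvi : ∑ t, vi t ^ 2 = 1) (hv : ∀ j, ∑ t, v j t ^ 2 = 1) (ρ : Fin n → ℝ)
    (hρ : ∀ j, ρ j = b j * ∑ t, vi t * v j t)
    (hl : ∀ j ∈ N, 9 / 100 ≤ ρ j) (hh : ∀ j ∈ N, ρ j ≤ 99 / 100)
    (htri : ∀ j ∈ N, ∀ k ∈ N, ρ j + ρ k - 1 ≤ b j * b k * ∑ t, v j t * v k t)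
    {d : ℕ} (hd : 2 ≤ d) (hN : N.card ≤ d) {ε : ℝ}
    (hε : ε = 1 / (92160 * d * Real.sqrt (Real.log d))) :
    (∑ j ∈ N, w j) / (92160 * 2880 * (d ^ 2 * Real.log d)) ≤ ∫ g, gainI N w b vi v ε g ∂(gam n) := by
  have hd' : (2:ℝ) ≤ d := by exact_mod_cast hd
  have hL : 0.69 ≤ Real.log d := by
    have := Real.log_le_log (by norm_num) hd'
    linarith [Real.log_two_gt_d9]
  have hs : 0.5 ≤ Real.sqrt (Real.log d) := Real.le_sqrt_of_sq_le (by norm_num; linarith)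
  have hss : Real.sqrt (Real.log d) ^ 2 = Real.log d := Real.sq_sqrt (by linarith)
  have hb2 : ∀ j, b j ^ 2 = 1 := fun j => by rcases hb j with h | h <;> rw [h] <;> norm_num
  set σ : Fin n → ℝ := fun j => Real.sqrt (1 - ρ j ^ 2) with hσd
  have hσ2 : ∀ j ∈ N, σ j ^ 2 = 1 - ρ j ^ 2 := fun j hj => by
    rw [hσd]; exact Real.sq_sqrt (by nlinarith [hl j hj, hh j hj])
  have hσ : ∀ j ∈ N, 1 / 8 ≤ σ j := fun j hj => by
    apply Real.le_sqrt_of_sq_le; nlinarith [hl j hj, hh j hj]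
  set p : Fin n → Fin n → ℝ := fun j t => (b j * v j t - ρ j * vi t) / σ j with hpd
  have hsum : ∀ j k, ∑ t, (b j * v j t - ρ j * vi t) * (b k * v k t - ρ k * vi t) =
      b j * b k * (∑ t, v j t * v k t) - ρ j * ρ k := fun j k => by
    have e : ∀ t, (b j * v j t - ρ j * vi t) * (b k * v k t - ρ k * vi t) =
      b j * b k * (v j t * v k t) - ρ k * b j * (vi t * v j t) - ρ j * b k * (vi t * v k t) + ρ j * ρ k * vi t ^ 2 :=
      fun t => by ring
    simp only [e, Finset.sum_add_distrib, Finset.sum_sub_distrib, ← Finset.mul_sum]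
    rw [hvi]
    have h1 := hρ j
    have h2 := hρ k
    linear_combination ρ k * h1 + ρ j * h2
  have hpp : ∀ j k, ∑ t, p j t * p k t = (b j * b k * (∑ t, v j t * v k t) - ρ j * ρ k) / (σ j * σ k) := fun j k => by
    rw [← hsum, Finset.sum_div]
    exact Finset.sum_congr rfl fun t _ => by rw [hpd]; exact div_mul_div_comm _ _ _ _
  have hp : ∀ j ∈ N, ∑ t, p j t ^ 2 = 1 := fun j hj => by
    have h8 := hσ j hj
    have := hpp j j
    simp only [← sq] at this
    rw [this, hv, hb2, hσ2 j hj, mul_one]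
    refine div_self ?_
    rw [← hσ2 j hj]; positivity
  have horth : ∀ j ∈ N, ∑ t, vi t * p j t = 0 := fun j hj => by
    have e : ∀ t, vi t * p j t = (b j * (vi t * v j t) - ρ j * vi t ^ 2) / σ j := fun t => by
      rw [hpd]; ring
    simp only [e, ← Finset.sum_div, Finset.sum_sub_distrib, ← Finset.mul_sum]
    rw [hvi, ← hρ]; simp
  have hc : ∀ j ∈ N, ∀ k ∈ N, -(0.835:ℝ) ≤ ∑ t, p j t * p k t := fun j hj k hk => by
    have h1 := hσ j hj
    have h2 := hσ k hk
    have hpos : 0 < σ j * σ k := by apply mul_pos <;> linarith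
    rw [hpp, le_div_iff₀ hpos]
    have ht := htri j hj k hk
    have a1 : 0 ≤ 1 - ρ j := by linarith [hh j hj]
    have a2 : 0 ≤ 1 - ρ k := by linarith [hh k hk]
    have b1 : (1 - ρ j) ^ 2 ≤ 0.835 * σ j ^ 2 := by rw [hσ2 j hj]; nlinarith [hl j hj]
    have b2 : (1 - ρ k) ^ 2 ≤ 0.835 * σ k ^ 2 := by rw [hσ2 k hk]; nlinarith [hl k hk]
    have b3 : ((1 - ρ j) * (1 - ρ k)) ^ 2 ≤ (0.835 * (σ j * σ k)) ^ 2 := by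
      calc _ = (1 - ρ j) ^ 2 * (1 - ρ k) ^ 2 := by ring
        _ ≤ (0.835 * σ j ^ 2) * (0.835 * σ k ^ 2) := by gcongr
        _ = _ := by ring
    have b4 := (sq_le_sq₀ (mul_nonneg a1 a2) (by positivity)).mp b3
    linarith
  have hEZ := EZ_ge N w hw p hp (η := 0.835) (by norm_num) hc (t := 40 * Real.sqrt (Real.log d)) (d := d)
    (by linarith) (by exact_mod_cast hN) (by linarith) (big_num hd)
  have hW0 : 0 ≤ ∑ j ∈ N, w j := Finset.sum_nonneg fun j _ => hw j
  set s := Real.sqrt (Real.log d) with hsd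
  have hsp : 0 < s := by linarith
  have hdp : (0:ℝ) < d := by linarith
  have hε0 : 0 < ε := by rw [hε]; positivity
  have hε1 : ε ≤ 1 := by
    rw [hε, div_le_one (by positivity)]; nlinarith
  have hvx := vertex N w b hw vi v p ρ σ hvi (fun j hj => by rw [abs_le]; constructor <;> linarith [hl j hj, hh j hj]) hσ
    (fun j hj t => by
      have : σ j ≠ 0 := by linarith [hσ j hj]
      rw [hpd]; field_simp; ring) hp horth hε0 hε1 hEZ
  refine le_trans (le_of_eq ?_) hvx
  rw [← hss, hε]
  field_simp
  ring

/-- Expected total gain: there are absolute constants `C, c > 0` such that for every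
`d ≥ 2`, `ε = 1/(C d √(log d))`, every weighted signed graph `G` on `n` vertices of
maximum degree `≤ d` with total edge weight `W`, and unit SDP vectors satisfying
`b_{ij}⟨v_i,v_j⟩ ∈ [ρ*-0.01, ρ*+0.01]` on all edges and all ℓ₂² triangle inequalities,
the expected total local gain `E_g[Σ_{i∈S} Δ_i]` is at least `c·W/(d² log d)`. -/
theorem expected_total_gain :
    ∃ C c : ℝ, C > 0 ∧ c > 0 ∧ ∀ d : ℕ, 2 ≤ d → ∀ ε : ℝ,
      ε = 1 / (C * d * Real.sqrt (Real.log d)) →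
      ∀ ρstar : ℝ, ρstar ∈ Set.Ioc (-1 : ℝ) 1 →
        (∀ ρ ∈ Set.Ioc (-1 : ℝ) 1, gwRatio ρstar ≤ gwRatio ρ) →
      ∀ (n : ℕ) (G : SimpleGraph (Fin n)) (_ : DecidableRel G.Adj),
        (∀ i, G.degree i ≤ d) →
      ∀ b w : Fin n → Fin n → ℝ,
        (∀ i j, b i j = b j i) → (∀ i j, b i j = 1 ∨ b i j = -1) →
        (∀ i j, w i j = w j i) → (∀ i j, 0 ≤ w i j) →
      ∀ W : ℝ, W = (1 / 2) * ∑ i, ∑ j ∈ G.neighborFinset i, w i j →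
      ∀ v : Fin n → (Fin n → ℝ),
        (∀ i, ∑ t, v i t ^ 2 = 1) →
        (∀ i j, G.Adj i j →
          b i j * ∑ t, v i t * v j t ∈ Set.Icc (ρstar - 0.01) (ρstar + 0.01)) →
        (∀ i j k : Fin n, ∀ ai aj ak : ℝ,
          (ai = 1 ∨ ai = -1) → (aj = 1 ∨ aj = -1) → (ak = 1 ∨ ak = -1) →
          (∑ t, (ai * v i t - aj * v j t) ^ 2) + ∑ t, (aj * v j t - ak * v k t) ^ 2 ≥
            ∑ t, (ai * v i t - ak * v k t) ^ 2) →
        (∫ g : Fin n → ℝ,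
            ∑ i, (if |∑ t, v i t * g t| < ε then
              max 0 (2 * (∑ j ∈ G.neighborFinset i,
                  if b i j * (if 0 ≤ ∑ t, v i t * g t then (1 : ℝ) else -1) *
                      (∑ t, v j t * g t) ≤ -ε then w i j else 0) -
                ∑ j ∈ G.neighborFinset i, w i j)
              else 0)
          ∂(Measure.pi fun _ : Fin n => gaussianReal 0 1)) ≥
          c * W / (d ^ 2 * Real.log d) := by
  refine ⟨92160, 1 / (92160 * 1440), by norm_num, by norm_num, ?_⟩
  intro d hd ε hε r hr hmin n G hdec hdeg b w hbs hb hws hw W hW v hv hρ htri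
  have hhalf := hmin (1 / 2) ⟨by norm_num, by norm_num⟩
  rw [gw_half] at hhalf
  have hr1 := rho_low hr.1 hhalf
  have hr2 := rho_high hr.2 (by linarith) hhalf
  have key : ∀ i, (∑ j ∈ G.neighborFinset i, w i j) / (92160 * 2880 * (d ^ 2 * Real.log d)) ≤
      ∫ g, gainI (G.neighborFinset i) (w i) (b i) (v i) v ε g ∂(gam n) := fun i => by
    have hi : ∀ j ∈ G.neighborFinset i, r - 0.01 ≤ b i j * ∑ t, v i t * v j t ∧
        b i j * ∑ t, v i t * v j t ≤ r + 0.01 := fun j hj =>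
      hρ i j (by simpa using hj)
    refine vertex_bound _ _ _ (hw i) (hb i) (v i) v (hv i) hv (fun j => b i j * ∑ t, v i t * v j t) (fun j => rfl)
      (fun j hj => by linarith [(hi j hj).1]) (fun j hj => by linarith [(hi j hj).2]) ?_ hd (hdeg i) hε
    intro j hj k hk
    have h := htri i j k 1 (b i j) (-b i k) (Or.inl rfl) (hb i j)
      (by rcases hb i k with h | h <;> rw [h] <;> norm_num)
    have e : ∀ (a c : ℝ) (x y : Fin n), (a = 1 ∨ a = -1) → (c = 1 ∨ c = -1) →
        ∑ t, (a * v x t - c * v y t) ^ 2 = 2 - 2 * (a * c * ∑ t, v x t * v y t) := fun a c x y ha hc => by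
      have e1 : ∀ t, (a * v x t - c * v y t) ^ 2 = a ^ 2 * v x t ^ 2 + c ^ 2 * v y t ^ 2 - 2 * (a * c) * (v x t * v y t) :=
        fun t => by ring
      simp only [e1, Finset.sum_add_distrib, Finset.sum_sub_distrib, ← Finset.mul_sum]
      rw [hv, hv]
      have ha2 : a ^ 2 = 1 := by rcases ha with h | h <;> rw [h] <;> norm_num
      have hc2 : c ^ 2 = 1 := by rcases hc with h | h <;> rw [h] <;> norm_num
      rw [ha2, hc2]; ring
    have hnk : -b i k = 1 ∨ -b i k = -1 := by rcases hb i k with h | h <;> rw [h] <;> norm_num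
    rw [e _ _ _ _ (Or.inl rfl) (hb i j), e _ _ _ _ (hb i j) hnk, e _ _ _ _ (Or.inl rfl) hnk] at h
    linarith
  have hint : (∫ g : Fin n → ℝ, ∑ i, gainI (G.neighborFinset i) (w i) (b i) (v i) v ε g ∂(gam n)) =
      ∑ i, ∫ g, gainI (G.neighborFinset i) (w i) (b i) (v i) v ε g ∂(gam n) :=
    integral_finsetSum _ fun i _ => gainI_int _ _ _ (hw i) _ _ _
  have hfin : 1 / (92160 * 1440) * W / (d ^ 2 * Real.log d) ≤
      ∫ g : Fin n → ℝ, ∑ i, gainI (G.neighborFinset i) (w i) (b i) (v i) v ε g ∂(gam n) := by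
    rw [hint]
    refine le_trans (le_of_eq ?_) (Finset.sum_le_sum fun i _ => key i)
    rw [← Finset.sum_div, hW]
    ring
  exact hfin
end
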